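/- If the energy I is κ-uniformly convex, then there exists a unique differential solution of the rate-independent system, i.e. a unique z ∈ W^{1,∞}(0,T;Z) with z(0) = z₀ and 0 ∈ ∂R(z′(t)) + D_zI(t,z(t)) for almost all t ∈ [0,T]. -/

import Mathlib

open MeasureTheory
open scoped RealInnerProductSpace NNReal

noncomputable section

namespace RIS

variable {Z V X : Type*}
  [NormedAddCommGroup Z] [InnerProductSpace ℝ Z] [CompleteSpace Z]
  [NormedAddCommGroup V] [InnerProductSpace ℝ V] [CompleteSpace V]
  [NormedAddCommGroup X] [NormedSpace ℝ X]

/-- The convex subdifferential of `R : V → ℝ` at `u`, as a subset of the dual `V →L[ℝ] ℝ`. -/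
def subdiff (R : V → ℝ) (u : V) : Set (V →L[ℝ] ℝ) :=
  {ξ | ∀ v : V, R u + ξ (v - u) ≤ R v}

/-- The semilinear energy `I(t,z) = ½⟨Az,z⟩ + F(z) − ⟨ℓ(t), z⟩`. -/
def energy (A : Z →L[ℝ] Z →L[ℝ] ℝ) (F : Z → ℝ) (ℓ : ℝ → V →L[ℝ] ℝ)
    (ι : Z →L[ℝ] V) (t : ℝ) (z : Z) : ℝ :=
  (1 / 2 : ℝ) * A z z + F z - ℓ t (ι z)

/-- `D_z I(t,z) = Az + D_zF(z) − ℓ(t)`, as an element of `Z*` (here `D_zF(z)` and `ℓ(t)`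
are elements of `V*`, composed with the embedding `ι : Z ↪ V`). -/
def DI (A : Z →L[ℝ] Z →L[ℝ] ℝ) (DF : Z → V →L[ℝ] ℝ) (ℓ : ℝ → V →L[ℝ] ℝ)
    (ι : Z →L[ℝ] V) (t : ℝ) (z : Z) : Z →L[ℝ] ℝ :=
  A z + (DF z).comp ι - (ℓ t).comp ι

/-- Local stability: `0 ∈ ∂R(0) + D_z I(t,z)`. -/
def LocStable (R : V → ℝ) (A : Z →L[ℝ] Z →L[ℝ] ℝ) (DF : Z → V →L[ℝ] ℝ)
    (ℓ : ℝ → V →L[ℝ] ℝ) (ι : Z →L[ℝ] V) (t : ℝ) (z : Z) : Prop :=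
  ∃ ξ ∈ subdiff R 0, ξ.comp ι + DI A DF ℓ ι t z = 0

/-- The local incremental minimization scheme with step size `τ`:
`z_{k+1}` minimizes `I(t_k, ·) + R(· − z_k)` over the ball `‖· − z_k‖_V ≤ τ`
and `t_{k+1} = min{t_k + τ − ‖z_{k+1} − z_k‖_V, T}`, starting from `t_0 = 0`, `z_0 = z₀`. -/
def Scheme (A : Z →L[ℝ] Z →L[ℝ] ℝ) (F : Z → ℝ) (R : V → ℝ) (ℓ : ℝ → V →L[ℝ] ℝ)
    (ι : Z →L[ℝ] V) (T τ : ℝ) (z₀ : Z) (t : ℕ → ℝ) (z : ℕ → Z) : Prop :=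
  t 0 = 0 ∧ z 0 = z₀ ∧
    ∀ k : ℕ,
      ‖ι (z (k + 1) - z k)‖ ≤ τ ∧
      (∀ w : Z, ‖ι (w - z k)‖ ≤ τ →
        energy A F ℓ ι (t k) (z (k + 1)) + R (ι (z (k + 1) - z k)) ≤
          energy A F ℓ ι (t k) w + R (ι (w - z k))) ∧
      t (k + 1) = min (t k + τ - ‖ι (z (k + 1) - z k)‖) T

/-- Standing assumptions on the data of the rate-independent system. -/
def StandingAssumptions (ι : Z →L[ℝ] V) (ιX : V →L[ℝ] X)
    (A : Z →L[ℝ] Z →L[ℝ] ℝ) (α : ℝ) (F : Z → ℝ) (DF : Z → V →L[ℝ] ℝ)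
    (D2F : Z → Z →L[ℝ] V →L[ℝ] ℝ) (R : V → ℝ) (ℓ : ℝ → V →L[ℝ] ℝ)
    (L T : ℝ) : Prop :=
  Function.Injective (ι : Z → V) ∧ DenseRange (ι : Z → V) ∧ (∀ w : Z, ‖ι w‖ ≤ ‖w‖) ∧
  Function.Injective (ιX : V → X) ∧
  (∀ z w : Z, A z w = A w z) ∧ 0 < α ∧ (∀ w : Z, α * ‖w‖ ^ 2 ≤ A w w) ∧
  (∀ w : Z, 0 ≤ F w) ∧
  (∀ w : Z, HasFDerivAt F ((DF w).comp ι) w) ∧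
  (∀ w : Z, HasFDerivAt DF (D2F w) w) ∧
  (∃ CF q : ℝ, 0 < CF ∧ 1 ≤ q ∧ ∀ w v : Z, ‖D2F w v‖ ≤ CF * (1 + ‖w‖ ^ q) * ‖v‖) ∧
  0 ≤ L ∧ LipschitzOnWith (Real.toNNReal L) ℓ (Set.Icc 0 T) ∧ 0 < T ∧
  ConvexOn ℝ Set.univ R ∧ LowerSemicontinuous R ∧ (∀ v : V, 0 ≤ R v) ∧
  (∀ (c : ℝ) (v : V), 0 ≤ c → R (c • v) = c * R v) ∧
  (∃ ρ₁ ρ₂ : ℝ, 0 < ρ₁ ∧ 0 < ρ₂ ∧ ∀ v : V, ρ₁ * ‖ιX v‖ ≤ R v ∧ R v ≤ ρ₂ * ‖v‖)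

/-- `κ`-uniform convexity of the energy: `⟨D²_zI(t,z)v,v⟩ ≥ κ‖v‖²_Z`, where
`D²_zI(t,z)[v,v] = ⟨Av,v⟩ + ⟨D²F(z)v, v⟩`. -/
def UniformlyConvex (A : Z →L[ℝ] Z →L[ℝ] ℝ) (D2F : Z → Z →L[ℝ] V →L[ℝ] ℝ)
    (ι : Z →L[ℝ] V) (κ : ℝ) : Prop :=
  0 < κ ∧ ∀ w v : Z, κ * ‖v‖ ^ 2 ≤ A v v + D2F w v (ι v)

/-- A differential solution of the rate-independent system: `y ∈ W^{1,1}(0,T;Z)`,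
`y(0) = z₀` and `0 ∈ ∂R(y'(t)) + D_zI(t, y(t))` for a.e. `t ∈ (0,T)`. -/
def IsDiffSol (A : Z →L[ℝ] Z →L[ℝ] ℝ) (DF : Z → V →L[ℝ] ℝ) (ℓ : ℝ → V →L[ℝ] ℝ)
    (R : V → ℝ) (ι : Z →L[ℝ] V) (T : ℝ) (z₀ : Z) (y : ℝ → Z) : Prop :=
  y 0 = z₀ ∧
  ∃ y' : ℝ → Z,
    IntervalIntegrable y' volume 0 T ∧
    (∀ s ∈ Set.Icc (0 : ℝ) T, y s = z₀ + ∫ r in (0 : ℝ)..s, y' r) ∧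
    (∀ᵐ s ∂(volume.restrict (Set.Ioo (0 : ℝ) T)),
      ∃ ξ ∈ subdiff R (ι (y' s)), ξ.comp ι + DI A DF ℓ ι s (y s) = 0)


/-- A differential solution of class `W^{1,∞}(0,T;Z)`: `y(0) = z₀`, `y` has an
essentially bounded integrable derivative `y'` on `(0,T)` with
`y(t) = z₀ + ∫₀ᵗ y'` and `0 ∈ ∂R(y'(t)) + D_zI(t,y(t))` for a.e. `t ∈ (0,T)`. -/
def IsDiffSolW1inf (A : Z →L[ℝ] Z →L[ℝ] ℝ) (DF : Z → V →L[ℝ] ℝ) (ℓ : ℝ → V →L[ℝ] ℝ)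
    (R : V → ℝ) (ι : Z →L[ℝ] V) (T : ℝ) (z₀ : Z) (y : ℝ → Z) : Prop :=
  y 0 = z₀ ∧
  ∃ y' : ℝ → Z,
    (∃ Cb : ℝ, ∀ᵐ s ∂(volume.restrict (Set.Ioo (0 : ℝ) T)), ‖y' s‖ ≤ Cb) ∧
    IntervalIntegrable y' volume 0 T ∧
    (∀ s ∈ Set.Icc (0 : ℝ) T, y s = z₀ + ∫ r in (0 : ℝ)..s, y' r) ∧
    (∀ᵐ s ∂(volume.restrict (Set.Ioo (0 : ℝ) T)),
      ∃ ξ ∈ subdiff R (ι (y' s)), ξ.comp ι + DI A DF ℓ ι s (y s) = 0)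

/-!
Two approximate solutions `y₁`, `y₂` are compared through the functional
`⟨DE(y₁) - DE(y₂), y₁ - y₂⟩`, where `E` is the energy without the load. It dominates
`κ ‖y₁ - y₂‖²` by uniform convexity. Stability of one solution tested with the increments of the
other, together with the symmetry of `D²E`, bounds its growth by the functional itself plus the
errors in the flow rule, so Grönwall's inequality controls it by these errors.

Without errors this is uniqueness. For existence, implicit Euler steps are incremental
minimization problems for a strongly convex function, and testing consecutive steps against each
other gives increments of size at most `L τ / κ`; local stability of `z₀` is what makes this hold
for the first step too. The affine interpolants satisfy the flow rule up to an error of order `τ`,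
hence form a Cauchy sequence by the comparison estimate. Their uniform Lipschitz bound gives the
limit a bounded derivative, and the flow rule survives the limit in an integrated, derivative-free
form.
-/

open Set Filter Topology

section Sublinear

variable {E E' : Type*} [NormedAddCommGroup E] [NormedSpace ℝ E]
  [NormedAddCommGroup E'] [NormedSpace ℝ E'] {Ψ : E → ℝ}

/-- A sublinear functional bounded above by a multiple of the norm: the abstract notion of a
rate-independent dissipation potential. -/
structure IsBoundedSublinear (Ψ : E → ℝ) : Prop where
  add_le : ∀ u v, Ψ (u + v) ≤ Ψ u + Ψ v
  smul : ∀ (c : ℝ) (v : E), 0 ≤ c → Ψ (c • v) = c * Ψ v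
  bound : ∃ ρ : ℝ≥0, ∀ v, Ψ v ≤ ρ * ‖v‖

namespace IsBoundedSublinear

lemma of_convexOn (hconv : ConvexOn ℝ univ Ψ)
    (hsmul : ∀ (c : ℝ) (v : E), 0 ≤ c → Ψ (c • v) = c * Ψ v)
    (hbound : ∃ ρ : ℝ≥0, ∀ v, Ψ v ≤ ρ * ‖v‖) : IsBoundedSublinear Ψ where
  add_le u v := by
    have hhalf : (0 : ℝ) ≤ 1 / 2 := by norm_num
    have hmid := hconv.2 (mem_univ u) (mem_univ v) hhalf hhalf (by norm_num)
    rw [← smul_add, hsmul _ _ hhalf, smul_eq_mul, smul_eq_mul] at hmid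
    linarith
  smul := hsmul
  bound := hbound

lemma map_zero (hΨ : IsBoundedSublinear Ψ) : Ψ 0 = 0 := by
  simpa using hΨ.smul 0 0 le_rfl

lemma comp (hΨ : IsBoundedSublinear Ψ) (f : E' →L[ℝ] E) : IsBoundedSublinear fun v => Ψ (f v) where
  add_le u v := by simpa only [map_add] using hΨ.add_le (f u) (f v)
  smul c v hc := by simpa only [map_smul] using hΨ.smul c (f v) hc
  bound := by
    obtain ⟨ρ, hρ⟩ := hΨ.bound
    refine ⟨ρ * ‖f‖₊, fun v => (hρ _).trans ?_⟩
    rw [NNReal.coe_mul, coe_nnnorm, mul_assoc]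
    gcongr
    exact f.le_opNorm v

lemma exists_lipschitzWith (hΨ : IsBoundedSublinear Ψ) : ∃ ρ : ℝ≥0, LipschitzWith ρ Ψ := by
  obtain ⟨ρ, hρ⟩ := hΨ.bound
  refine ⟨ρ, LipschitzWith.of_le_add_mul ρ fun u v => ?_⟩
  have hle := hΨ.add_le v (u - v)
  rw [add_sub_cancel] at hle
  rw [dist_eq_norm]
  linarith [hρ (u - v)]

lemma continuous (hΨ : IsBoundedSublinear Ψ) : Continuous Ψ :=
  let ⟨_, hρ⟩ := hΨ.exists_lipschitzWith
  hρ.continuous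

lemma convexOn (hΨ : IsBoundedSublinear Ψ) : ConvexOn ℝ univ Ψ :=
  ⟨convex_univ, fun u _ v _ a b ha hb _ => by
    simpa only [hΨ.smul _ _ ha, hΨ.smul _ _ hb, smul_eq_mul] using hΨ.add_le (a • u) (b • v)⟩

end IsBoundedSublinear

end Sublinear

section Subdifferential

variable {E E' : Type*} [NormedAddCommGroup E] [InnerProductSpace ℝ E]
  [NormedAddCommGroup E'] [InnerProductSpace ℝ E']

lemma neg_mem_subdiff_of_forall_le {f ψ : E → ℝ} {D : E →L[ℝ] ℝ} {x : E} (hf : HasFDerivAt f D x)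
    (hψ : ConvexOn ℝ univ ψ) (hmin : ∀ y, f x + ψ x ≤ f y + ψ y) : -D ∈ subdiff ψ x := by
  intro y
  have hline : HasDerivAt (fun s : ℝ => f (x + s • (y - x))) (D (y - x)) 0 := by
    have hinner : HasDerivAt (fun s : ℝ => x + s • (y - x)) (y - x) 0 := by
      simpa using ((hasDerivAt_id (0 : ℝ)).smul_const (y - x)).const_add x
    exact HasFDerivAt.comp_hasDerivAt 0 (by simpa using hf) hinner
  have hslope := (hasDerivWithinAt_iff_tendsto_slope' (by simp)).1
    (hline.hasDerivWithinAt (s := Ioi 0))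
  have : ψ x - ψ y ≤ D (y - x) := by
    refine ge_of_tendsto hslope ?_
    filter_upwards [Ioo_mem_nhdsGT (zero_lt_one (α := ℝ))] with s hs
    have hconv := hψ.2 (mem_univ x) (mem_univ y) (sub_nonneg.2 hs.2.le) hs.1.le (sub_add_cancel 1 s)
    rw [show (1 - s) • x + s • y = x + s • (y - x) by module, smul_eq_mul, smul_eq_mul] at hconv
    rw [slope_def_field, le_div_iff₀ (by simpa using hs.1), zero_smul, add_zero, sub_zero]
    linarith [hmin (x + s • (y - x))]
  rw [neg_apply]
  linarith

namespace IsBoundedSublinear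

variable {Ψ : E → ℝ}

lemma mem_subdiff_iff (hΨ : IsBoundedSublinear Ψ) {η : E →L[ℝ] ℝ} {u : E} :
    η ∈ subdiff Ψ u ↔ (∀ v, η v ≤ Ψ v) ∧ η u = Ψ u := by
  refine ⟨fun h => ⟨fun v => ?_, ?_⟩, fun ⟨hle, heq⟩ v => ?_⟩
  · have := h (u + v)
    rw [add_sub_cancel_left] at this
    linarith [hΨ.add_le u v]
  · have hzero := h 0
    have htwo := h ((2 : ℝ) • u)
    rw [hΨ.map_zero, zero_sub, map_neg] at hzero
    rw [hΨ.smul _ _ zero_le_two, two_smul, add_sub_cancel_right] at htwo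
    linarith
  · rw [map_sub, heq]
    linarith [hle v]

lemma mem_subdiff_zero_iff (hΨ : IsBoundedSublinear Ψ) {η : E →L[ℝ] ℝ} :
    η ∈ subdiff Ψ 0 ↔ ∀ v, η v ≤ Ψ v := by
  simp [hΨ.mem_subdiff_iff, hΨ.map_zero]

lemma mem_subdiff_smul (hΨ : IsBoundedSublinear Ψ) {η : E →L[ℝ] ℝ} {u : E} {c : ℝ} (hc : 0 ≤ c)
    (hη : η ∈ subdiff Ψ u) : η ∈ subdiff Ψ (c • u) := by
  rw [hΨ.mem_subdiff_iff] at hη ⊢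
  exact ⟨hη.1, by rw [map_smul, hη.2, smul_eq_mul, hΨ.smul _ _ hc]⟩

lemma exists_extension (hΨ : IsBoundedSublinear Ψ) (ι : E' →L[ℝ] E) {η : E' →L[ℝ] ℝ}
    (hη : ∀ v, η v ≤ Ψ (ι v)) : ∃ ξ : E →L[ℝ] ℝ, ξ.comp ι = η ∧ ∀ v, ξ v ≤ Ψ v := by
  obtain ⟨ρ, hρ⟩ := hΨ.bound
  obtain ⟨σ, hσ⟩ := (ι : E' →ₗ[ℝ] E).rangeRestrict.exists_rightInverse_of_surjective
    (LinearMap.range_rangeRestrict _)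
  have hισ (x : (ι : E' →ₗ[ℝ] E).range) : ι (σ x) = x :=
    congrArg Subtype.val (LinearMap.congr_fun hσ x)
  -- `η` vanishes on `ker ι`, since `η v ≤ Ψ 0 = 0` for both `v` and `-v` in it.
  have hker {u v : E'} (huv : ι u = ι v) : η u = η v := by
    have hu := hη (u - v)
    have hv := hη (v - u)
    rw [map_sub, map_sub, huv, sub_self, hΨ.map_zero] at hu hv
    linarith
  obtain ⟨g, hg, hgΨ⟩ := exists_extension_of_le_sublinear ⟨_, (η : E' →ₗ[ℝ] ℝ) ∘ₗ σ⟩ Ψ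
    (fun c hc v => hΨ.smul c v hc.le) hΨ.add_le fun x =>
      (hη (σ x)).trans_eq (by rw [hισ])
  refine ⟨g.mkContinuous ρ fun v => abs_le.2 ⟨?_, (hgΨ v).trans (hρ v)⟩, ?_, hgΨ⟩
  · have := (hgΨ (-v)).trans (hρ (-v))
    rw [map_neg, norm_neg] at this
    linarith
  · ext v
    exact (hg ⟨ι v, v, rfl⟩).trans (hker (hισ _))

lemma exists_mem_subdiff_comp_add_eq_zero_iff (hΨ : IsBoundedSublinear Ψ) (ι : E' →L[ℝ] E)
    (D : E' →L[ℝ] ℝ) (u : E') :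
    (∃ ξ ∈ subdiff Ψ (ι u), ξ.comp ι + D = 0) ↔ -D ∈ subdiff (fun v => Ψ (ι v)) u := by
  constructor
  · rintro ⟨ξ, hξ, hD⟩ v
    rw [← eq_neg_of_add_eq_zero_left hD, ContinuousLinearMap.comp_apply, map_sub]
    exact hξ (ι v)
  · rw [(hΨ.comp ι).mem_subdiff_iff]
    rintro ⟨hle, heq⟩
    obtain ⟨ξ, hξι, hξΨ⟩ := hΨ.exists_extension ι hle
    refine ⟨ξ, hΨ.mem_subdiff_iff.2 ⟨hξΨ, ?_⟩, by rw [hξι, neg_add_cancel]⟩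
    rw [← heq, ← hξι, ContinuousLinearMap.comp_apply]

end IsBoundedSublinear

end Subdifferential

section StrongConvexity

variable {E : Type*} [NormedAddCommGroup E] [NormedSpace ℝ E] {f : E → ℝ} {m : ℝ}

lemma strongConvexOn_univ_of_first_order {D : E → E →L[ℝ] ℝ}
    (h : ∀ a b, f b + D b (a - b) + m / 2 * ‖a - b‖ ^ 2 ≤ f a) : StrongConvexOn univ m f := by
  refine ⟨convex_univ, fun x _ y _ a b ha hb hab => ?_⟩
  obtain rfl : b = 1 - a := by linarith
  have hx := h x (a • x + (1 - a) • y)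
  have hy := h y (a • x + (1 - a) • y)
  rw [show x - (a • x + (1 - a) • y) = (1 - a) • (x - y) by module, map_smul, norm_smul, mul_pow,
    Real.norm_eq_abs, sq_abs, smul_eq_mul] at hx
  rw [show y - (a • x + (1 - a) • y) = (-a) • (x - y) by module, map_smul, norm_smul, mul_pow,
    Real.norm_eq_abs, sq_abs, smul_eq_mul] at hy
  have hsum := add_le_add (mul_le_mul_of_nonneg_left hx ha) (mul_le_mul_of_nonneg_left hy hb)
  rw [smul_eq_mul, smul_eq_mul]
  linarith

lemma bddBelow_range_of_strongConvexOn (hf : StrongConvexOn univ m f) (hm : 0 < m)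
    (hlsc : LowerSemicontinuous f) : BddBelow (range f) := by
  obtain ⟨δ, hδ, hball⟩ := Metric.eventually_nhds_iff_ball.1 (hlsc 0 (f 0 - 1) (by linarith))
  set r := δ / 2 with hr
  have hr0 : 0 < r := by positivity
  set c := 1 / r + m / 2 * r with hc
  refine ⟨f 0 - 1 - c ^ 2 / (2 * m), ?_⟩
  rintro _ ⟨x, rfl⟩
  have hc0 : 0 ≤ c ^ 2 / (2 * m) := by positivity
  rcases le_or_gt ‖x‖ r with hx | hx
  · have := hball x (by rw [mem_ball_zero_iff]; linarith)
    linarith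
  -- Off the ball, compare with the value at distance `r` from `0` on the segment `[0, x]`.
  have hx0 : 0 < ‖x‖ := hr0.trans hx
  have hnear := hball ((r / ‖x‖) • x + (1 - r / ‖x‖) • 0) (by
    rw [smul_zero, add_zero, mem_ball_zero_iff, norm_smul, Real.norm_of_nonneg (by positivity),
      div_mul_cancel₀ _ hx0.ne']
    linarith)
  have hconv := hf.2 (mem_univ x) (mem_univ 0) (by positivity : 0 ≤ r / ‖x‖)
    (sub_nonneg.2 ((div_le_one hx0).2 hx.le)) (add_sub_cancel _ _)
  rw [sub_zero, smul_eq_mul, smul_eq_mul] at hconv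
  have hlow : f 0 + m / 2 * ‖x‖ ^ 2 - c * ‖x‖ ≤ f x := by
    have hscaled : 0 ≤ r / ‖x‖ * (f x - f 0 - m / 2 * ‖x‖ ^ 2 + c * ‖x‖) := by
      have : r / ‖x‖ * (c * ‖x‖) = 1 + r / ‖x‖ * (r / ‖x‖ * (m / 2 * ‖x‖ ^ 2)) := by
        rw [hc]; field_simp
      linarith
    linarith [nonneg_of_mul_nonneg_right hscaled (by positivity)]
  have hsquare : m / 2 * ‖x‖ ^ 2 - c * ‖x‖ + c ^ 2 / (2 * m) = (m * ‖x‖ - c) ^ 2 / (2 * m) := by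
    field_simp
    ring
  have : 0 ≤ (m * ‖x‖ - c) ^ 2 / (2 * m) := by positivity
  linarith

lemma dist_le_of_strongConvexOn (hf : StrongConvexOn univ m f) (hm : 0 < m) {i δ : ℝ}
    (hi : ∀ x, i ≤ f x) {x y : E} (hx : f x ≤ i + δ) (hy : f y ≤ i + δ) :
    dist x y ≤ √(8 / m * δ) := by
  have hhalf : (0 : ℝ) ≤ 1 / 2 := by norm_num
  have hmid := hf.2 (mem_univ x) (mem_univ y) hhalf hhalf (by norm_num)
  rw [smul_eq_mul, smul_eq_mul] at hmid
  have hsq : m * ‖x - y‖ ^ 2 ≤ 8 * δ := by linarith [hi ((1 / 2 : ℝ) • x + (1 / 2 : ℝ) • y)]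
  refine Real.le_sqrt_of_sq_le ?_
  rw [dist_eq_norm, div_mul_eq_mul_div, le_div_iff₀' hm]
  exact hsq

lemma exists_forall_le_of_strongConvexOn [CompleteSpace E] (hf : StrongConvexOn univ m f)
    (hm : 0 < m) (hlsc : LowerSemicontinuous f) : ∃ x, ∀ y, f x ≤ f y := by
  have hlow (x : E) : ⨅ y, f y ≤ f x := ciInf_le (bddBelow_range_of_strongConvexOn hf hm hlsc) x
  have hδ : Tendsto (fun n : ℕ => 1 / ((n : ℝ) + 1)) atTop (𝓝 0) :=
    tendsto_one_div_add_atTop_nhds_zero_nat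
  have hmin (n : ℕ) : ∃ x, f x < (⨅ y, f y) + 1 / ((n : ℝ) + 1) :=
    exists_lt_of_ciInf_lt (lt_add_of_pos_right _ (by positivity))
  choose x hx using hmin
  have hsublevel {N n : ℕ} (hn : N ≤ n) : f (x n) ≤ (⨅ y, f y) + 1 / ((N : ℝ) + 1) :=
    (hx n).le.trans (by gcongr)
  have hcauchy : CauchySeq x := by
    refine cauchySeq_of_le_tendsto_0 (fun N : ℕ => √(8 / m * (1 / ((N : ℝ) + 1))))
      (fun n k N hn hk => dist_le_of_strongConvexOn hf hm hlow (hsublevel hn) (hsublevel hk)) ?_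
    simpa only [mul_zero, Real.sqrt_zero] using (hδ.const_mul (8 / m)).sqrt
  obtain ⟨x₀, hx₀⟩ := cauchySeq_tendsto_of_complete hcauchy
  refine ⟨x₀, fun y => le_trans ?_ (hlow y)⟩
  refine ge_of_tendsto' (by simpa only [add_zero] using hδ.const_add (⨅ y, f y)) fun N => ?_
  exact (hlsc.isClosed_preimage _).mem_of_tendsto hx₀
    (eventually_atTop.2 ⟨N, fun n hn => hsublevel hn⟩)

end StrongConvexity

section Energy

variable {W : Type*} [NormedAddCommGroup W] [NormedSpace ℝ W]
  {E : W → ℝ} {DE : W → W →L[ℝ] ℝ} {D2E : W → W →L[ℝ] W →L[ℝ] ℝ} {κ : ℝ≥0}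

/-- `E` is a twice differentiable function with derivatives `DE` and `D2E`, whose Hessian is
bounded below by `κ > 0` and Lipschitz on bounded sets: the load-independent part of the energy. -/
structure IsUniformlyConvexEnergy (E : W → ℝ) (DE : W → W →L[ℝ] ℝ)
    (D2E : W → W →L[ℝ] W →L[ℝ] ℝ) (κ : ℝ≥0) : Prop where
  hasFDerivAt : ∀ z, HasFDerivAt E (DE z) z
  hasFDerivAt_deriv : ∀ z, HasFDerivAt DE (D2E z) z
  pos : 0 < κ
  le_hessian : ∀ z v, κ * ‖v‖ ^ 2 ≤ D2E z v v
  lipschitzOn_hessian : ∀ s, Bornology.IsBounded s → ∃ C, LipschitzOnWith C D2E s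

/-- The constant `Q` controls on `s` the size of the derivative `D2` of `D`, the increments of `D`
and its first-order Taylor remainder. -/
structure TaylorBoundOn (D : W → W →L[ℝ] ℝ) (D2 : W → W →L[ℝ] W →L[ℝ] ℝ) (s : Set W)
    (Q : ℝ≥0) : Prop where
  lipschitzOn : LipschitzOnWith Q D s
  norm_le : ∀ a ∈ s, ‖D2 a‖ ≤ Q
  norm_remainder_le : ∀ a ∈ s, ∀ b ∈ s, ‖D a - D b - D2 b (a - b)‖ ≤ Q * ‖a - b‖ ^ 2

lemma exists_taylorBoundOn {D : W → W →L[ℝ] ℝ} {D2 : W → W →L[ℝ] W →L[ℝ] ℝ} {s : Set W}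
    {C : ℝ≥0} (hD : ∀ z, HasFDerivAt D (D2 z) z) (hLip : LipschitzOnWith C D2 s)
    (hs : Convex ℝ s) (hbdd : Bornology.IsBounded s) : ∃ Q, TaylorBoundOn D D2 s Q := by
  obtain ⟨r, hr⟩ := Metric.isBounded_iff.1 hbdd
  have himage : Bornology.IsBounded (D2 '' s) := Metric.isBounded_iff.2 ⟨C * r, by
    rintro _ ⟨x, hx, rfl⟩ _ ⟨y, hy, rfl⟩
    exact (hLip.dist_le_mul x hx y hy).trans (by gcongr; exact hr hx hy)⟩
  obtain ⟨B, hB⟩ := himage.exists_norm_le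
  have hnorm : ∀ a ∈ s, ‖D2 a‖₊ ≤ B.toNNReal := fun a ha =>
    NNReal.coe_le_coe.1 ((hB _ (mem_image_of_mem _ ha)).trans (Real.le_coe_toNNReal B))
  refine ⟨max C B.toNNReal, ?_, fun a ha => ?_, fun a ha b hb => ?_⟩
  · exact (hs.lipschitzOnWith_of_nnnorm_hasFDerivWithin_le
      (fun z _ => (hD z).hasFDerivWithinAt) hnorm).weaken (le_max_right _ _)
  · exact NNReal.coe_le_coe.2 ((hnorm a ha).trans (le_max_right _ _))
  · have hseg : ∀ x ∈ segment ℝ b a, ‖D2 x - D2 b‖ ≤ C * ‖a - b‖ := fun x hx => by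
      refine (hLip.norm_sub_le (hs.segment_subset hb ha hx) hb).trans ?_
      gcongr
      exact norm_sub_le_of_mem_segment hx
    refine ((convex_segment b a).norm_image_sub_le_of_norm_hasFDerivWithin_le'
      (fun z _ => (hD z).hasFDerivWithinAt) hseg (left_mem_segment ℝ b a)
      (right_mem_segment ℝ b a)).trans ?_
    rw [mul_assoc, ← sq]
    gcongr
    exact le_max_left _ _

namespace IsUniformlyConvexEnergy

lemma continuous_deriv (hE : IsUniformlyConvexEnergy E DE D2E κ) : Continuous DE :=
  continuous_iff_continuousAt.2 fun z => (hE.hasFDerivAt_deriv z).continuousAt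

lemma hessian_symm (hE : IsUniformlyConvexEnergy E DE D2E κ) (z u v : W) :
    D2E z u v = D2E z v u :=
  second_derivative_symmetric hE.hasFDerivAt (hE.hasFDerivAt_deriv z) u v

lemma exists_taylorBoundOn (hE : IsUniformlyConvexEnergy E DE D2E κ) {s : Set W}
    (hs : Convex ℝ s) (hbdd : Bornology.IsBounded s) : ∃ Q, TaylorBoundOn DE D2E s Q :=
  let ⟨_, hC⟩ := hE.lipschitzOn_hessian s hbdd
  RIS.exists_taylorBoundOn hE.hasFDerivAt_deriv hC hs hbdd

lemma deriv_strongMonotone (hE : IsUniformlyConvexEnergy E DE D2E κ) (a b : W) :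
    κ * ‖a - b‖ ^ 2 ≤ (DE a - DE b) (a - b) := by
  have hderiv (s : ℝ) : HasDerivAt (fun s : ℝ => DE (b + s • (a - b)) (a - b))
      (D2E (b + s • (a - b)) (a - b) (a - b)) s := by
    have hline : HasDerivAt (fun s : ℝ => b + s • (a - b)) (a - b) s := by
      simpa using ((hasDerivAt_id s).smul_const (a - b)).const_add b
    simpa using ((hE.hasFDerivAt_deriv _).comp_hasDerivAt s hline).clm_apply
      (hasDerivAt_const s (a - b))
  obtain ⟨c, -, hc⟩ := exists_hasDerivAt_eq_slope _ _ zero_lt_one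
    (fun s _ => (hderiv s).continuousAt.continuousWithinAt) (fun s _ => hderiv s)
  have hle := hE.le_hessian (b + c • (a - b)) (a - b)
  rw [hc] at hle
  simpa using hle

lemma first_order_le (hE : IsUniformlyConvexEnergy E DE D2E κ) (a b : W) :
    E b + DE b (a - b) + κ / 2 * ‖a - b‖ ^ 2 ≤ E a := by
  set w := a - b with hw
  have hderiv (s : ℝ) : HasDerivAt
      (fun s : ℝ => E (b + s • w) - s * DE b w - κ / 2 * ‖w‖ ^ 2 * s ^ 2)
      (DE (b + s • w) w - DE b w - κ * ‖w‖ ^ 2 * s) s := by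
    have hline : HasDerivAt (fun s : ℝ => b + s • w) w s := by
      simpa using ((hasDerivAt_id s).smul_const w).const_add b
    refine ((((hE.hasFDerivAt _).comp_hasDerivAt s hline).sub
      ((hasDerivAt_id s).mul_const (DE b w))).sub
      ((hasDerivAt_pow 2 s).const_mul (κ / 2 * ‖w‖ ^ 2 : ℝ))).congr_deriv ?_
    simp only [one_mul, Nat.cast_ofNat]
    ring
  have hmono : MonotoneOn (fun s : ℝ => E (b + s • w) - s * DE b w - κ / 2 * ‖w‖ ^ 2 * s ^ 2)
      (Icc 0 1) := by
    refine monotoneOn_of_deriv_nonneg (convex_Icc 0 1)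
      (fun s _ => (hderiv s).continuousAt.continuousWithinAt)
      (fun s _ => (hderiv s).differentiableAt.differentiableWithinAt) fun s hs => ?_
    rw [interior_Icc] at hs
    rw [(hderiv s).deriv]
    have hmon := hE.deriv_strongMonotone (b + s • w) b
    rw [add_sub_cancel_left, map_smul, norm_smul, Real.norm_of_nonneg hs.1.le, smul_eq_mul,
      sub_apply] at hmon
    refine nonneg_of_mul_nonneg_right (a := s) ?_ hs.1
    linarith
  have hends := hmono (left_mem_Icc.2 zero_le_one) (right_mem_Icc.2 zero_le_one) zero_le_one
  rw [show a = b + (1 : ℝ) • w by rw [hw]; module]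
  simp only [zero_smul, add_zero, zero_mul, one_mul] at hends
  linarith

end IsUniformlyConvexEnergy

end Energy

section IncrementalProblem

variable {W : Type*} [NormedAddCommGroup W] [InnerProductSpace ℝ W]
  {E : W → ℝ} {DE : W → W →L[ℝ] ℝ} {D2E : W → W →L[ℝ] W →L[ℝ] ℝ} {κ : ℝ≥0} {Ψ : W → ℝ}

namespace IsUniformlyConvexEnergy

lemma exists_sub_deriv_mem_subdiff [CompleteSpace W] (hE : IsUniformlyConvexEnergy E DE D2E κ)
    (hΨ : IsBoundedSublinear Ψ) (φ : W →L[ℝ] ℝ) (z : W) :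
    ∃ z', φ - DE z' ∈ subdiff Ψ (z' - z) := by
  let f : W → ℝ := fun d => E (z + d) - φ (z + d)
  have hderiv (d : W) : HasFDerivAt f (DE (z + d) - φ) d :=
    (((hE.hasFDerivAt _).sub φ.hasFDerivAt).comp d ((hasFDerivAt_id d).const_add z))
  have hf : StrongConvexOn univ κ f :=
    strongConvexOn_univ_of_first_order (D := fun d => DE (z + d) - φ) fun a b => by
      have hle := hE.first_order_le (z + a) (z + b)
      rw [add_sub_add_left_eq_sub] at hle
      simp only [f, map_add, sub_apply, map_sub] at hle ⊢
      linarith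
  have hJ : StrongConvexOn univ κ (f + Ψ) := by
    simpa only [StrongConvexOn, add_zero] using! hf.add hΨ.convexOn.uniformConvexOn_zero
  have hcont : Continuous (f + Ψ) :=
    (continuous_iff_continuousAt.2 fun d => (hderiv d).continuousAt).add hΨ.continuous
  obtain ⟨d, hd⟩ := exists_forall_le_of_strongConvexOn hJ (NNReal.coe_pos.2 hE.pos)
    hcont.lowerSemicontinuous
  refine ⟨z + d, ?_⟩
  rw [add_sub_cancel_left, ← neg_sub]
  exact neg_mem_subdiff_of_forall_le (hderiv d) hΨ.convexOn hd

lemma mul_norm_sub_le (hE : IsUniformlyConvexEnergy E DE D2E κ) (hΨ : IsBoundedSublinear Ψ)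
    {φ φ' : W →L[ℝ] ℝ} {z z' : W} (hz : ∀ v, (φ - DE z) v ≤ Ψ v)
    (hz' : φ' - DE z' ∈ subdiff Ψ (z' - z)) : κ * ‖z' - z‖ ≤ ‖φ' - φ‖ := by
  rcases (norm_nonneg (z' - z)).eq_or_lt with hzero | hpos
  · rw [← hzero, mul_zero]
    exact norm_nonneg _
  have hsq : κ * ‖z' - z‖ * ‖z' - z‖ ≤ ‖φ' - φ‖ * ‖z' - z‖ :=
    calc κ * ‖z' - z‖ * ‖z' - z‖ = κ * ‖z' - z‖ ^ 2 := by ring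
      _ ≤ (DE z' - DE z) (z' - z) := hE.deriv_strongMonotone z' z
      _ ≤ (φ' - φ) (z' - z) := by
        have hle := hz (z' - z)
        have heq := (hΨ.mem_subdiff_iff.1 hz').2
        rw [sub_apply] at hle heq ⊢
        rw [sub_apply]
        linarith
      _ ≤ ‖φ' - φ‖ * ‖z' - z‖ := (Real.le_norm_self _).trans ((φ' - φ).le_opNorm _)
  exact le_of_mul_le_mul_right hsq hpos

lemma exists_incremental_sequence [CompleteSpace W] (hE : IsUniformlyConvexEnergy E DE D2E κ)
    (hΨ : IsBoundedSublinear Ψ) (φ : ℕ → W →L[ℝ] ℝ) (z₀ : W) :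
    ∃ z : ℕ → W, z 0 = z₀ ∧ ∀ k, φ (k + 1) - DE (z (k + 1)) ∈ subdiff Ψ (z (k + 1) - z k) := by
  choose next hnext using hE.exists_sub_deriv_mem_subdiff hΨ
  exact ⟨fun k => Nat.rec z₀ (fun k z => next (φ (k + 1)) z) k, rfl, fun k => hnext _ _⟩

lemma mul_norm_increment_le (hE : IsUniformlyConvexEnergy E DE D2E κ) (hΨ : IsBoundedSublinear Ψ)
    {φ : ℕ → W →L[ℝ] ℝ} {z : ℕ → W} (hz₀ : ∀ v, (φ 0 - DE (z 0)) v ≤ Ψ v)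
    (hz : ∀ k, φ (k + 1) - DE (z (k + 1)) ∈ subdiff Ψ (z (k + 1) - z k)) (k : ℕ) :
    κ * ‖z (k + 1) - z k‖ ≤ ‖φ (k + 1) - φ k‖ := by
  refine hE.mul_norm_sub_le hΨ ?_ (hz k)
  cases k with
  | zero => exact hz₀
  | succ k => exact (hΨ.mem_subdiff_iff.1 (hz k)).1

end IsUniformlyConvexEnergy

end IncrementalProblem

section BoundedPrimitives

lemma mem_closedBall_of_lipschitzOnWith_Icc {α : Type*} [PseudoMetricSpace α] {y : ℝ → α} {y₀ : α}
    {M : ℝ≥0} {T s : ℝ} (h : LipschitzOnWith M y (Icc 0 T)) (hy : y 0 = y₀) (hs : s ∈ Icc 0 T) :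
    y s ∈ Metric.closedBall y₀ (M * T) := by
  have hdist := h.dist_le_mul s hs 0 (left_mem_Icc.2 (hs.1.trans hs.2))
  rw [hy, Real.dist_0_eq_abs, abs_of_nonneg hs.1] at hdist
  exact hdist.trans (by gcongr; exact hs.2)

variable {E : Type*} [NormedAddCommGroup E] [NormedSpace ℝ E] {T : ℝ} {y₀ : E} {M : ℝ≥0}
  {y g : ℝ → E}

/-- On `[0, T]`, `y` is a primitive of `g` with `y 0 = y₀`, and `‖g‖ ≤ M` almost everywhere;
this represents `y ∈ W^{1,∞}(0,T;E)` through a derivative `g`. -/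
structure IsBoundedPrimitive (T : ℝ) (y₀ : E) (M : ℝ≥0) (y g : ℝ → E) : Prop where
  norm_le : ∀ᵐ s ∂volume.restrict (Ioo 0 T), ‖g s‖ ≤ M
  intervalIntegrable : IntervalIntegrable g volume 0 T
  eq_integral : ∀ s ∈ Icc 0 T, y s = y₀ + ∫ r in (0 : ℝ)..s, g r

lemma ae_Ioc_of_ae_restrict_Ioo {p : ℝ → Prop} {a b c d : ℝ}
    (h : ∀ᵐ s ∂volume.restrict (Ioo a b), p s) (hac : a ≤ c) (hdb : d ≤ b) :
    ∀ᵐ s ∂volume.restrict (Ioc c d), p s := by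
  rw [Measure.restrict_congr_set Ioo_ae_eq_Ioc] at h
  exact ae_restrict_of_ae_restrict_of_subset (Ioc_subset_Ioc hac hdb) h

lemma ae_hasDerivAt_of_eq_integral [CompleteSpace E] (hg : IntervalIntegrable g volume 0 T)
    (hy : ∀ s ∈ Icc 0 T, y s = y₀ + ∫ r in (0 : ℝ)..s, g r) :
    ∀ᵐ s ∂volume.restrict (Ioo 0 T), HasDerivAt y (g s) s := by
  rw [ae_restrict_iff' measurableSet_Ioo]
  filter_upwards [hg.ae_hasDerivAt_integral] with s hs hsT
  have hT : 0 ≤ T := (hsT.1.trans hsT.2).le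
  rw [uIcc_of_le hT] at hs
  have hprim := (hs (Ioo_subset_Icc_self hsT) 0 (left_mem_Icc.2 hT)).const_add y₀
  refine hprim.congr_of_eventuallyEq ?_
  filter_upwards [Icc_mem_nhds hsT.1 hsT.2] with t ht using hy t ht

namespace IsBoundedPrimitive

lemma mono {M' : ℝ≥0} (h : IsBoundedPrimitive T y₀ M y g) (hM : M ≤ M') :
    IsBoundedPrimitive T y₀ M' y g where
  norm_le := h.norm_le.mono fun _ hs => hs.trans hM
  intervalIntegrable := h.intervalIntegrable
  eq_integral := h.eq_integral

lemma apply_zero (h : IsBoundedPrimitive T y₀ M y g) (hT : 0 ≤ T) : y 0 = y₀ := by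
  rw [h.eq_integral 0 (left_mem_Icc.2 hT), intervalIntegral.integral_same, add_zero]

lemma intervalIntegrable_of_mem (h : IsBoundedPrimitive T y₀ M y g) {a b : ℝ}
    (ha : a ∈ Icc 0 T) (hb : b ∈ Icc 0 T) : IntervalIntegrable g volume a b := by
  refine h.intervalIntegrable.mono_set ?_
  rw [uIcc_of_le (ha.1.trans ha.2)]
  exact uIcc_subset_Icc ha hb

lemma sub_eq_integral (h : IsBoundedPrimitive T y₀ M y g) {a b : ℝ} (ha : a ∈ Icc 0 T)
    (hb : b ∈ Icc 0 T) : y b - y a = ∫ s in a..b, g s := by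
  have h0 : (0 : ℝ) ∈ Icc 0 T := left_mem_Icc.2 (ha.1.trans ha.2)
  rw [h.eq_integral a ha, h.eq_integral b hb, add_sub_add_left_eq_sub,
    intervalIntegral.integral_interval_sub_left (h.intervalIntegrable_of_mem h0 hb)
      (h.intervalIntegrable_of_mem h0 ha)]

lemma lipschitzOnWith (h : IsBoundedPrimitive T y₀ M y g) : LipschitzOnWith M y (Icc 0 T) := by
  refine LipschitzOnWith.of_dist_le_mul fun a ha b hb => ?_
  rw [dist_eq_norm, Real.dist_eq, h.sub_eq_integral hb ha]
  refine intervalIntegral.norm_integral_le_of_norm_le_const_ae ?_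
  exact (ae_restrict_iff' measurableSet_uIoc).1
    (ae_Ioc_of_ae_restrict_Ioo h.norm_le (le_min hb.1 ha.1) (max_le hb.2 ha.2))

lemma ae_hasDerivAt [CompleteSpace E] (h : IsBoundedPrimitive T y₀ M y g) :
    ∀ᵐ s ∂volume.restrict (Ioo 0 T), HasDerivAt y (g s) s :=
  ae_hasDerivAt_of_eq_integral h.intervalIntegrable h.eq_integral

end IsBoundedPrimitive

end BoundedPrimitives

section SolutionNotions

variable {W : Type*} [NormedAddCommGroup W] [InnerProductSpace ℝ W]
  {Ψ : W → ℝ} {w : ℝ → W →L[ℝ] ℝ} {T e C : ℝ} {M Λ : ℝ≥0} {y₀ : W} {y g : ℝ → W}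

/-- The flow rule `w(s) ∈ ∂Ψ(g(s))` for almost every `s ∈ (0, T)`, up to an error of norm at
most `e`. For a differential solution `g = y'` and `w = ℓ - DE ∘ y`. -/
def SatisfiesFlowRule (Ψ : W → ℝ) (w : ℝ → W →L[ℝ] ℝ) (T e : ℝ) (g : ℝ → W) : Prop :=
  ∀ᵐ s ∂volume.restrict (Ioo 0 T), ∃ η ∈ subdiff Ψ (g s), ‖η - w s‖ ≤ e

/-- Derivative-free form of the flow rule for an `M`-Lipschitz path `y` driven by the force `w`:
stability and an incremental energy inequality with a quadratic remainder, both up to an error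
governed by `e`. Unlike the flow rule itself, it is stable under pointwise convergence. -/
structure IsEnergeticPath (Ψ : W → ℝ) (w : ℝ → W →L[ℝ] ℝ) (T : ℝ) (M : ℝ≥0) (C e : ℝ)
    (y : ℝ → W) : Prop where
  lipschitzOnWith : LipschitzOnWith M y (Icc 0 T)
  stable : ∀ a ∈ Icc 0 T, ∀ v, w a v ≤ Ψ v + e * ‖v‖
  energy_le : ∀ a ∈ Icc 0 T, ∀ b ∈ Icc 0 T, a ≤ b →
    Ψ (y b - y a) ≤ w a (y b - y a) + C * (b - a) ^ 2 + e * M * (b - a)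

lemma IsBoundedSublinear.integrable_comp {α : Type*} [MeasurableSpace α] {μ : Measure α}
    (hΨ : IsBoundedSublinear Ψ) {f : α → W} (hf : Integrable f μ) :
    Integrable (fun x => Ψ (f x)) μ := by
  obtain ⟨ρ, hρ⟩ := hΨ.exists_lipschitzWith
  refine (hf.norm.const_mul (ρ : ℝ)).mono'
    (hΨ.continuous.comp_aestronglyMeasurable hf.aestronglyMeasurable) (.of_forall fun x => ?_)
  simpa only [hΨ.map_zero, sub_zero] using hρ.norm_sub_le (f x) 0

lemma IsBoundedSublinear.map_intervalIntegral_le [CompleteSpace W] (hΨ : IsBoundedSublinear Ψ)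
    {a b : ℝ} (hab : a ≤ b) (hg : IntervalIntegrable g volume a b) :
    Ψ (∫ s in a..b, g s) ≤ ∫ s in a..b, Ψ (g s) := by
  rcases hab.eq_or_lt with rfl | hlt
  · simp [hΨ.map_zero]
  rw [intervalIntegrable_iff_integrableOn_Ioc_of_le hab] at hg
  have hjensen := hΨ.convexOn.map_set_average_le hΨ.continuous.continuousOn isClosed_univ
    (by simpa using hlt) measure_Ioc_lt_top.ne (.of_forall fun _ => mem_univ _) hg
    (hΨ.integrable_comp hg)
  have hba : 0 < b - a := sub_pos.2 hlt
  rw [setAverage_eq, setAverage_eq, Real.volume_real_Ioc_of_le hab,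
    hΨ.smul _ _ (inv_nonneg.2 hba.le), smul_eq_mul, ← intervalIntegral.integral_of_le hab,
    ← intervalIntegral.integral_of_le hab] at hjensen
  exact le_of_mul_le_mul_left hjensen (inv_pos.2 hba)

namespace SatisfiesFlowRule

lemma le_add_mul_norm (h : SatisfiesFlowRule Ψ w T e g) (hΨ : IsBoundedSublinear Ψ) (hT : 0 < T)
    (hw : ContinuousOn w (Icc 0 T)) {a : ℝ} (ha : a ∈ Icc 0 T) (v : W) :
    w a v ≤ Ψ v + e * ‖v‖ := by
  have hdense := (Measure.dense_of_ae ((ae_restrict_iff' measurableSet_Ioo).1 h)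
    ).open_subset_closure_inter (isOpen_Ioo (a := (0 : ℝ)) (b := T))
  have hcl := closure_minimal hdense isClosed_closure
  rw [closure_Ioo hT.ne] at hcl
  refine ContinuousWithinAt.closure_le (hcl ha)
    (((hw.clm_apply continuousOn_const) a ha).mono fun s hs => Ioo_subset_Icc_self hs.1)
    continuousWithinAt_const ?_
  rintro s ⟨hsT, hs⟩
  obtain ⟨η, hη, herr⟩ := hs hsT
  have hle := (abs_le.1 ((η - w s).le_of_opNorm_le herr v)).1
  have hsub := (hΨ.mem_subdiff_iff.1 hη).1 v
  rw [sub_apply] at hle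
  linarith

lemma ae_le (h : SatisfiesFlowRule Ψ w T e g) (hΨ : IsBoundedSublinear Ψ)
    (hy : IsBoundedPrimitive T y₀ M y g) (hw : LipschitzOnWith Λ w (Icc 0 T)) {a b : ℝ}
    (ha : a ∈ Icc 0 T) (hb : b ∈ Icc 0 T) :
    ∀ᵐ s ∂volume.restrict (Ioc a b), Ψ (g s) ≤ w a (g s) + (Λ * (b - a) + e) * M := by
  filter_upwards [ae_Ioc_of_ae_restrict_Ioo h ha.1 hb.2,
    ae_Ioc_of_ae_restrict_Ioo hy.norm_le ha.1 hb.2, ae_restrict_mem measurableSet_Ioc]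
    with s ⟨η, hη, herr⟩ hgs hs
  have hforce : ‖η - w a‖ ≤ Λ * (b - a) + e :=
    calc ‖η - w a‖ ≤ ‖η - w s‖ + ‖w s - w a‖ := norm_sub_le_norm_sub_add_norm_sub _ _ _
      _ ≤ e + Λ * ‖s - a‖ :=
        add_le_add herr (hw.norm_sub_le ⟨ha.1.trans hs.1.le, hs.2.trans hb.2⟩ ha)
      _ ≤ Λ * (b - a) + e := by
        rw [add_comm, Real.norm_of_nonneg (sub_nonneg.2 hs.1.le)]
        gcongr
        exact hs.2
  have hle := (Real.le_norm_self _).trans ((η - w a).le_of_opNorm_le_of_le hforce hgs)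
  rw [sub_apply, (hΨ.mem_subdiff_iff.1 hη).2] at hle
  linarith

lemma isEnergeticPath [CompleteSpace W] (h : SatisfiesFlowRule Ψ w T e g)
    (hΨ : IsBoundedSublinear Ψ) (hT : 0 < T) (hy : IsBoundedPrimitive T y₀ M y g)
    (hw : LipschitzOnWith Λ w (Icc 0 T)) : IsEnergeticPath Ψ w T M (Λ * M) e y where
  lipschitzOnWith := hy.lipschitzOnWith
  stable _ ha := h.le_add_mul_norm hΨ hT hw.continuousOn ha
  energy_le a ha b hb hab := by
    have hg := hy.intervalIntegrable_of_mem ha hb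
    have hgI := (intervalIntegrable_iff_integrableOn_Ioc_of_le hab).1 hg
    rw [hy.sub_eq_integral ha hb]
    calc Ψ (∫ s in a..b, g s) ≤ ∫ s in a..b, Ψ (g s) := hΨ.map_intervalIntegral_le hab hg
      _ ≤ ∫ s in a..b, (w a (g s) + (Λ * (b - a) + e) * M) := by
        rw [intervalIntegral.integral_of_le hab, intervalIntegral.integral_of_le hab]
        exact integral_mono_ae (hΨ.integrable_comp hgI)
          (((w a).integrable_comp hgI).add (integrable_const _)) (h.ae_le hΨ hy hw ha hb)
      _ = w a (∫ s in a..b, g s) + Λ * M * (b - a) ^ 2 + e * M * (b - a) := by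
        rw [intervalIntegral.integral_add ⟨(w a).integrable_comp hg.1, (w a).integrable_comp hg.2⟩
          intervalIntegrable_const, (w a).intervalIntegral_comp_comm hg,
          intervalIntegral.integral_const, smul_eq_mul]
        ring

end SatisfiesFlowRule

namespace IsEnergeticPath

lemma mem_subdiff_of_hasDerivAt (h : IsEnergeticPath Ψ w T M C 0 y) (hΨ : IsBoundedSublinear Ψ)
    {s : ℝ} (hs : s ∈ Ioo 0 T) {v : W} (hv : HasDerivAt y v s) : w s ∈ subdiff Ψ v := by
  have hsT := Ioo_subset_Icc_self hs
  have hstable (u : W) : w s u ≤ Ψ u := by simpa using h.stable s hsT u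
  refine hΨ.mem_subdiff_iff.2 ⟨hstable, le_antisymm (hstable v) ?_⟩
  have hslope := hv.tendsto_slope_zero_right
  have hrem : Tendsto (fun t : ℝ => C * t) (𝓝[>] 0) (𝓝 0) := by
    have : Tendsto (fun t : ℝ => C * t) (𝓝 0) (𝓝 (C * 0)) := tendsto_id.const_mul C
    rw [mul_zero] at this
    exact this.mono_left nhdsWithin_le_nhds
  have hright := ((w s).continuous.tendsto v).comp hslope |>.add hrem
  rw [add_zero] at hright
  refine le_of_tendsto_of_tendsto ((hΨ.continuous.tendsto v).comp hslope) hright ?_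
  filter_upwards [Ioo_mem_nhdsGT (sub_pos.2 hs.2)] with t ⟨ht, htT⟩
  have hen := h.energy_le s hsT (s + t) ⟨by linarith [hs.1], by linarith⟩ (by linarith)
  rw [add_sub_cancel_left, zero_mul, zero_mul, add_zero] at hen
  simp only [Function.comp_apply, hΨ.smul _ _ (inv_nonneg.2 ht.le), map_smul, smul_eq_mul]
  calc t⁻¹ * Ψ (y (s + t) - y s)
      ≤ t⁻¹ * (w s (y (s + t) - y s) + C * t ^ 2) :=
        mul_le_mul_of_nonneg_left hen (inv_nonneg.2 ht.le)
    _ = t⁻¹ * w s (y (s + t) - y s) + C * t := by field_simp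

lemma satisfiesFlowRule [CompleteSpace W] (h : IsEnergeticPath Ψ w T M C 0 y)
    (hΨ : IsBoundedSublinear Ψ) {M' : ℝ≥0} (hy : IsBoundedPrimitive T y₀ M' y g) :
    SatisfiesFlowRule Ψ w T 0 g := by
  filter_upwards [hy.ae_hasDerivAt, ae_restrict_mem measurableSet_Ioo] with s hderiv hs
  exact ⟨w s, h.mem_subdiff_of_hasDerivAt hΨ hs hderiv, by rw [sub_self, norm_zero]⟩

end IsEnergeticPath

end SolutionNotions

section Comparison

variable {W : Type*} [NormedAddCommGroup W] [NormedSpace ℝ W]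
  {D : W → W →L[ℝ] ℝ} {D2 : W → W →L[ℝ] W →L[ℝ] ℝ} {s : Set W} {Q : ℝ≥0}

/-- The functional `⟨D(x₁) - D(x₂), x₁ - x₂⟩` through which two solutions are compared. -/
def monotonicityGap (D : W → W →L[ℝ] ℝ) (x₁ x₂ : W) : ℝ := (D x₁ - D x₂) (x₁ - x₂)

-- The terms linear in the increments combine by symmetry of the second derivatives.
lemma monotonicityGap_increment_eq (hsymm : ∀ z u v, D2 z u v = D2 z v u) (x₁ x₂ y₁ y₂ : W) :
    monotonicityGap D y₁ y₂ - monotonicityGap D x₁ x₂ =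
      2 * (D x₁ - D x₂) ((y₁ - x₁) - (y₂ - x₂))
      + ((D x₂ - D x₁ - D2 x₁ (x₂ - x₁)) (y₁ - x₁) + (D x₁ - D x₂ - D2 x₂ (x₁ - x₂)) (y₂ - x₂))
      + (D2 x₁ (y₁ - x₁) - D2 x₂ (y₂ - x₂)) ((y₁ - x₁) - (y₂ - x₂))
      + ((D y₁ - D x₁ - D2 x₁ (y₁ - x₁)) - (D y₂ - D x₂ - D2 x₂ (y₂ - x₂))) (y₁ - y₂) := by
  have hsymm₁ := hsymm x₁ (y₁ - x₁) (x₁ - x₂)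
  have hsymm₂ := hsymm x₂ (y₂ - x₂) (x₁ - x₂)
  simp only [monotonicityGap, sub_apply, map_sub] at hsymm₁ hsymm₂ ⊢
  linear_combination hsymm₁ - hsymm₂

lemma TaylorBoundOn.monotonicityGap_increment_le (hQ : TaylorBoundOn D D2 s Q)
    (hsymm : ∀ z u v, D2 z u v = D2 z v u) {x₁ x₂ y₁ y₂ : W} (hx₁ : x₁ ∈ s) (hx₂ : x₂ ∈ s)
    (hy₁ : y₁ ∈ s) (hy₂ : y₂ ∈ s) {m R : ℝ} (hm₁ : ‖y₁ - x₁‖ ≤ m) (hm₂ : ‖y₂ - x₂‖ ≤ m)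
    (hR : ‖y₁ - y₂‖ ≤ R) :
    monotonicityGap D y₁ y₂ - monotonicityGap D x₁ x₂ ≤
      2 * (D x₁ - D x₂) ((y₁ - x₁) - (y₂ - x₂)) + 2 * Q * m * ‖x₁ - x₂‖ ^ 2
        + (4 + 2 * R) * Q * m ^ 2 := by
  have hcross₁ : (D x₂ - D x₁ - D2 x₁ (x₂ - x₁)) (y₁ - x₁) ≤ Q * ‖x₁ - x₂‖ ^ 2 * m := by
    rw [norm_sub_rev x₁ x₂]
    exact (Real.le_norm_self _).trans
      (ContinuousLinearMap.le_of_opNorm_le_of_le _ (hQ.norm_remainder_le x₂ hx₂ x₁ hx₁) hm₁)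
  have hcross₂ : (D x₁ - D x₂ - D2 x₂ (x₁ - x₂)) (y₂ - x₂) ≤ Q * ‖x₁ - x₂‖ ^ 2 * m :=
    (Real.le_norm_self _).trans
      (ContinuousLinearMap.le_of_opNorm_le_of_le _ (hQ.norm_remainder_le x₁ hx₁ x₂ hx₂) hm₂)
  have hquad : (D2 x₁ (y₁ - x₁) - D2 x₂ (y₂ - x₂)) ((y₁ - x₁) - (y₂ - x₂)) ≤
      (Q * m + Q * m) * (m + m) :=
    (Real.le_norm_self _).trans (ContinuousLinearMap.le_of_opNorm_le_of_le _
      (norm_sub_le_of_le ((D2 x₁).le_of_opNorm_le_of_le (hQ.norm_le x₁ hx₁) hm₁)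
        ((D2 x₂).le_of_opNorm_le_of_le (hQ.norm_le x₂ hx₂) hm₂)) (norm_sub_le_of_le hm₁ hm₂))
  have hrem {x y : W} (hx : x ∈ s) (hy : y ∈ s) (hxy : ‖y - x‖ ≤ m) :
      ‖D y - D x - D2 x (y - x)‖ ≤ Q * m ^ 2 :=
    (hQ.norm_remainder_le y hy x hx).trans (by gcongr)
  have htaylor :
      ((D y₁ - D x₁ - D2 x₁ (y₁ - x₁)) - (D y₂ - D x₂ - D2 x₂ (y₂ - x₂))) (y₁ - y₂) ≤
        (Q * m ^ 2 + Q * m ^ 2) * R :=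
    (Real.le_norm_self _).trans (ContinuousLinearMap.le_of_opNorm_le_of_le _
      (norm_sub_le_of_le (hrem hx₁ hy₁ hm₁) (hrem hx₂ hy₂ hm₂)) hR)
  rw [monotonicityGap_increment_eq hsymm]
  linarith

end Comparison

section Uniqueness

lemma le_gronwallBound_of_eventually_sub_le {f : ℝ → ℝ} {a b K ε δ : ℝ}
    (hf : ContinuousOn f (Icc a b)) (ha : f a ≤ δ)
    (hinc : ∀ x ∈ Ico a b, ∃ C : ℝ, ∀ᶠ z in 𝓝[>] x,
      f z - f x ≤ (K * f x + ε) * (z - x) + C * (z - x) ^ 2) :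
    ∀ x ∈ Icc a b, f x ≤ gronwallBound δ K ε (x - a) := by
  refine le_gronwallBound_of_liminf_deriv_right_le (f' := fun x => K * f x + ε) hf ?_ ha
    fun _ _ => le_rfl
  intro x hx r hr
  obtain ⟨C, hC⟩ := hinc x hx
  have hlim : Tendsto (fun z => K * f x + ε + C * (z - x)) (𝓝[>] x) (𝓝 (K * f x + ε)) := by
    have hcont : Continuous fun z => K * f x + ε + C * (z - x) := by fun_prop
    simpa only [sub_self, mul_zero, add_zero] using (hcont.tendsto x).mono_left nhdsWithin_le_nhds
  refine Eventually.frequently ?_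
  filter_upwards [hC, hlim.eventually_lt_const hr, self_mem_nhdsWithin] with z hz hlt hxz
  refine lt_of_le_of_lt ?_ hlt
  rw [inv_mul_le_iff₀ (sub_pos.2 hxz)]
  linarith

lemma gronwallBound_zero_mul (K c ε x : ℝ) :
    gronwallBound 0 K (c * ε) x = c * gronwallBound 0 K ε x := by
  unfold gronwallBound
  split_ifs <;> ring

variable {W : Type*} [NormedAddCommGroup W] [InnerProductSpace ℝ W]
  {E : W → ℝ} {DE : W → W →L[ℝ] ℝ} {D2E : W → W →L[ℝ] W →L[ℝ] ℝ} {κ M Q : ℝ≥0} {Ψ : W → ℝ}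
  {w₁ w₂ : ℝ → W →L[ℝ] ℝ} {T C e₁ e₂ : ℝ} {y₁ y₂ : ℝ → W}

lemma IsEnergeticPath.force_sub_increment_le (h₁ : IsEnergeticPath Ψ w₁ T M C e₁ y₁)
    (h₂ : IsEnergeticPath Ψ w₂ T M C e₂ y₂) (he₁ : 0 ≤ e₁) (he₂ : 0 ≤ e₂) {a b : ℝ}
    (ha : a ∈ Icc 0 T) (hb : b ∈ Icc 0 T) (hab : a ≤ b) :
    (w₂ a - w₁ a) ((y₁ b - y₁ a) - (y₂ b - y₂ a)) ≤
      2 * M * (e₁ + e₂) * (b - a) + 2 * C * (b - a) ^ 2 := by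
  have hnorm {w : ℝ → W →L[ℝ] ℝ} {e : ℝ} {y : ℝ → W} (h : IsEnergeticPath Ψ w T M C e y) :
      ‖y b - y a‖ ≤ M * (b - a) := by
    simpa only [Real.norm_of_nonneg (sub_nonneg.2 hab)] using h.lipschitzOnWith.norm_sub_le hb ha
  have hstable₁ := h₁.stable a ha (y₂ b - y₂ a)
  have hstable₂ := h₂.stable a ha (y₁ b - y₁ a)
  have henergy₁ := h₁.energy_le a ha b hb hab
  have henergy₂ := h₂.energy_le a ha b hb hab
  have herr₁ := mul_le_mul_of_nonneg_left (hnorm h₂) he₁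
  have herr₂ := mul_le_mul_of_nonneg_left (hnorm h₁) he₂
  rw [map_sub, sub_apply, sub_apply]
  linarith

namespace IsUniformlyConvexEnergy

variable {ℓ : ℝ → W →L[ℝ] ℝ} {z₀ : W}

lemma monotonicityGap_increment_le (hE : IsUniformlyConvexEnergy E DE D2E κ)
    (hQ : TaylorBoundOn DE D2E (Metric.closedBall z₀ (M * T)) Q)
    (h₁ : IsEnergeticPath Ψ (fun s => ℓ s - DE (y₁ s)) T M C e₁ y₁)
    (h₂ : IsEnergeticPath Ψ (fun s => ℓ s - DE (y₂ s)) T M C e₂ y₂)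
    (he₁ : 0 ≤ e₁) (he₂ : 0 ≤ e₂) (hz₁ : y₁ 0 = z₀) (hz₂ : y₂ 0 = z₀) {a b : ℝ}
    (ha : a ∈ Icc 0 T) (hb : b ∈ Icc 0 T) (hab : a ≤ b) :
    monotonicityGap DE (y₁ b) (y₂ b) - monotonicityGap DE (y₁ a) (y₂ a) ≤
      (2 * Q * M / κ * monotonicityGap DE (y₁ a) (y₂ a) + 4 * M * (e₁ + e₂)) * (b - a)
        + (4 * C + (4 + 2 * (M * T + M * T)) * Q * M ^ 2) * (b - a) ^ 2 := by
  have hnorm {y : ℝ → W} (hy : LipschitzOnWith M y (Icc 0 T)) : ‖y b - y a‖ ≤ M * (b - a) := by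
    simpa only [Real.norm_of_nonneg (sub_nonneg.2 hab)] using hy.norm_sub_le hb ha
  have hball₁ {s : ℝ} := mem_closedBall_of_lipschitzOnWith_Icc (s := s) h₁.lipschitzOnWith hz₁
  have hball₂ {s : ℝ} := mem_closedBall_of_lipschitzOnWith_Icc (s := s) h₂.lipschitzOnWith hz₂
  have hdiam : ‖y₁ b - y₂ b‖ ≤ M * T + M * T := by
    rw [← dist_eq_norm]
    exact (dist_triangle_right _ _ _).trans (add_le_add (hball₁ hb) (hball₂ hb))
  have hinc := hQ.monotonicityGap_increment_le hE.hessian_symm (hball₁ ha) (hball₂ ha)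
    (hball₁ hb) (hball₂ hb) (hnorm h₁.lipschitzOnWith) (hnorm h₂.lipschitzOnWith) hdiam
  have hforce := h₁.force_sub_increment_le h₂ he₁ he₂ ha hb hab
  rw [sub_sub_sub_cancel_left] at hforce
  have _ := sub_nonneg.2 hab
  have hgap : 2 * Q * (M * (b - a)) * ‖y₁ a - y₂ a‖ ^ 2 ≤
      2 * Q * M / κ * monotonicityGap DE (y₁ a) (y₂ a) * (b - a) :=
    calc 2 * Q * (M * (b - a)) * ‖y₁ a - y₂ a‖ ^ 2
        ≤ 2 * Q * (M * (b - a)) * (monotonicityGap DE (y₁ a) (y₂ a) / κ) := by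
          gcongr
          exact (le_div_iff₀' (NNReal.coe_pos.2 hE.pos)).2 (hE.deriv_strongMonotone _ _)
      _ = 2 * Q * M / κ * monotonicityGap DE (y₁ a) (y₂ a) * (b - a) := by ring
  linarith

lemma monotonicityGap_le_gronwallBound (hE : IsUniformlyConvexEnergy E DE D2E κ)
    (hQ : TaylorBoundOn DE D2E (Metric.closedBall z₀ (M * T)) Q)
    (h₁ : IsEnergeticPath Ψ (fun s => ℓ s - DE (y₁ s)) T M C e₁ y₁)
    (h₂ : IsEnergeticPath Ψ (fun s => ℓ s - DE (y₂ s)) T M C e₂ y₂)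
    (he₁ : 0 ≤ e₁) (he₂ : 0 ≤ e₂) (hz₁ : y₁ 0 = z₀) (hz₂ : y₂ 0 = z₀) {s : ℝ}
    (hs : s ∈ Icc 0 T) :
    monotonicityGap DE (y₁ s) (y₂ s) ≤
      gronwallBound 0 (2 * Q * M / κ) (4 * M * (e₁ + e₂)) s := by
  have hcont : ContinuousOn (fun s => monotonicityGap DE (y₁ s) (y₂ s)) (Icc 0 T) :=
    ((hE.continuous_deriv.comp_continuousOn h₁.lipschitzOnWith.continuousOn).sub
      (hE.continuous_deriv.comp_continuousOn h₂.lipschitzOnWith.continuousOn)).clm_apply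
      (h₁.lipschitzOnWith.continuousOn.sub h₂.lipschitzOnWith.continuousOn)
  have hinit : monotonicityGap DE (y₁ 0) (y₂ 0) ≤ 0 := by simp [monotonicityGap, hz₁, hz₂]
  have hle := le_gronwallBound_of_eventually_sub_le (K := 2 * Q * M / κ)
    (ε := 4 * M * (e₁ + e₂)) hcont hinit ?_ s hs
  · rwa [sub_zero] at hle
  refine fun a ha => ⟨4 * C + (4 + 2 * (M * T + M * T)) * Q * M ^ 2, ?_⟩
  filter_upwards [Ioo_mem_nhdsGT ha.2] with b hb
  exact hE.monotonicityGap_increment_le hQ h₁ h₂ he₁ he₂ hz₁ hz₂ (Ico_subset_Icc_self ha)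
    ⟨ha.1.trans hb.1.le, hb.2.le⟩ hb.1.le

lemma exists_norm_sub_sq_le (hE : IsUniformlyConvexEnergy E DE D2E κ) (Ψ : W → ℝ)
    (ℓ : ℝ → W →L[ℝ] ℝ) (T : ℝ) (M : ℝ≥0) (C : ℝ) (z₀ : W) :
    ∃ K : ℝ≥0, ∀ {e₁ e₂ : ℝ} {y₁ y₂ : ℝ → W}, 0 ≤ e₁ → 0 ≤ e₂ →
      IsEnergeticPath Ψ (fun s => ℓ s - DE (y₁ s)) T M C e₁ y₁ →
      IsEnergeticPath Ψ (fun s => ℓ s - DE (y₂ s)) T M C e₂ y₂ → y₁ 0 = z₀ → y₂ 0 = z₀ →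
      ∀ s ∈ Icc 0 T, ‖y₁ s - y₂ s‖ ^ 2 ≤ K * (e₁ + e₂) := by
  obtain ⟨Q, hQ⟩ := hE.exists_taylorBoundOn (convex_closedBall z₀ (M * T))
    Metric.isBounded_closedBall
  have hκ : (0 : ℝ) < κ := NNReal.coe_pos.2 hE.pos
  refine ⟨(gronwallBound 0 (2 * Q * M / κ) (4 * M) T / κ).toNNReal,
    fun {e₁ e₂ y₁ y₂} he₁ he₂ h₁ h₂ hz₁ hz₂ s hs => ?_⟩
  refine le_trans ?_ (mul_le_mul_of_nonneg_right (Real.le_coe_toNNReal _) (add_nonneg he₁ he₂))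
  rw [div_mul_eq_mul_div, le_div_iff₀' hκ]
  calc κ * ‖y₁ s - y₂ s‖ ^ 2 ≤ monotonicityGap DE (y₁ s) (y₂ s) := hE.deriv_strongMonotone _ _
    _ ≤ gronwallBound 0 (2 * Q * M / κ) (4 * M * (e₁ + e₂)) s :=
      hE.monotonicityGap_le_gronwallBound hQ h₁ h₂ he₁ he₂ hz₁ hz₂ hs
    _ = (e₁ + e₂) * gronwallBound 0 (2 * Q * M / κ) (4 * M) s := by
      rw [mul_comm (4 * (M : ℝ)), gronwallBound_zero_mul]
    _ ≤ (e₁ + e₂) * gronwallBound 0 (2 * Q * M / κ) (4 * M) T := by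
      gcongr
      exact gronwallBound_mono le_rfl (by positivity) (by positivity) hs.2
    _ = gronwallBound 0 (2 * Q * M / κ) (4 * M) T * (e₁ + e₂) := mul_comm _ _

end IsUniformlyConvexEnergy

end Uniqueness

section Interpolation

variable {E : Type*} [NormedAddCommGroup E] [NormedSpace ℝ E]

/-- Derivative of the piecewise affine interpolant `stepPath τ z`: the constant difference
quotient `(z (k + 1) - z k) / τ` on `[k τ, (k + 1) τ)`. -/
def stepVelocity (τ : ℝ) (z : ℕ → E) (s : ℝ) : E := τ⁻¹ • (z (⌊s / τ⌋₊ + 1) - z ⌊s / τ⌋₊)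

/-- Continuous piecewise affine interpolant of the values `z k` at the nodes `k τ`, encoded as a
primitive of its derivative. -/
def stepPath (τ : ℝ) (z : ℕ → E) (t : ℝ) : E := z 0 + ∫ r in (0 : ℝ)..t, stepVelocity τ z r

variable {τ s : ℝ} {z : ℕ → E}

lemma stepVelocity_eq_of_mem_Ico (hτ : 0 < τ) {k : ℕ} (hs : s ∈ Ico (k * τ) ((k + 1) * τ)) :
    stepVelocity τ z s = τ⁻¹ • (z (k + 1) - z k) := by
  have hfloor : ⌊s / τ⌋₊ = k := by
    rw [Nat.floor_eq_iff (div_nonneg ((by positivity : (0 : ℝ) ≤ k * τ).trans hs.1) hτ.le),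
      le_div_iff₀ hτ, div_lt_iff₀ hτ]
    exact hs
  rw [stepVelocity, hfloor]

lemma exists_mem_Ico_of_mem_Ioo (hτ : 0 < τ) {N : ℕ} (hs : s ∈ Ioo 0 (N * τ)) :
    ∃ k < N, s ∈ Ico (k * τ) ((k + 1) * τ) := by
  refine ⟨⌊s / τ⌋₊, ?_, ?_, ?_⟩
  · rw [Nat.floor_lt (div_nonneg hs.1.le hτ.le), div_lt_iff₀ hτ]
    exact hs.2
  · exact (le_div_iff₀ hτ).1 (Nat.floor_le (div_nonneg hs.1.le hτ.le))
  · exact (div_lt_iff₀ hτ).1 (Nat.lt_floor_add_one _)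

lemma stronglyMeasurable_stepVelocity (τ : ℝ) (z : ℕ → E) :
    StronglyMeasurable (stepVelocity τ z) :=
  (StronglyMeasurable.of_discrete (f := fun k : ℕ => τ⁻¹ • (z (k + 1) - z k))).comp_measurable
    (Nat.measurable_floor.comp (measurable_id.div_const τ))

lemma isBoundedPrimitive_stepPath (hτ : 0 < τ) {N : ℕ} {M : ℝ≥0}
    (hz : ∀ k < N, ‖z (k + 1) - z k‖ ≤ M * τ) :
    IsBoundedPrimitive (N * τ) (z 0) M (stepPath τ z) (stepVelocity τ z) := by
  have hbound : ∀ᵐ s ∂volume.restrict (Ioo 0 (N * τ)), ‖stepVelocity τ z s‖ ≤ M := by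
    filter_upwards [ae_restrict_mem measurableSet_Ioo] with s hs
    obtain ⟨k, hk, hsk⟩ := exists_mem_Ico_of_mem_Ioo hτ hs
    rw [stepVelocity_eq_of_mem_Ico hτ hsk, norm_smul, norm_inv, Real.norm_of_nonneg hτ.le,
      inv_mul_le_iff₀' hτ]
    exact hz k hk
  refine ⟨hbound, ?_, fun _ _ => rfl⟩
  rw [intervalIntegrable_iff_integrableOn_Ioc_of_le (by positivity)]
  exact Measure.integrableOn_of_bounded measure_Ioc_lt_top.ne
    (stronglyMeasurable_stepVelocity τ z).aestronglyMeasurable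
    (ae_Ioc_of_ae_restrict_Ioo hbound le_rfl le_rfl)

lemma stepPath_natCast_mul [CompleteSpace E] (hτ : 0 < τ) (z : ℕ → E) (n : ℕ) :
    stepPath τ z (n * τ) = z n := by
  have hcongr (k : ℕ) : EqOn (stepVelocity τ z) (fun _ => τ⁻¹ • (z (k + 1) - z k))
      (Ioo (k * τ) ((k + 1 : ℕ) * τ)) := fun s hs =>
    stepVelocity_eq_of_mem_Ico hτ (by exact_mod_cast Ioo_subset_Ico_self hs)
  have hle (k : ℕ) : (k : ℝ) * τ ≤ (k + 1 : ℕ) * τ := by gcongr; simp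
  have hint (k : ℕ) : ∫ s in (k : ℝ) * τ..(k + 1 : ℕ) * τ, stepVelocity τ z s =
      z (k + 1) - z k := by
    rw [intervalIntegral.integral_congr_Ioo_of_le (hle k) (hcongr k),
      intervalIntegral.integral_const, ← sub_mul, Nat.cast_succ, add_sub_cancel_left, one_mul,
      smul_inv_smul₀ hτ.ne']
  have hsum := intervalIntegral.sum_integral_adjacent_intervals
    (μ := volume) (a := fun k : ℕ => (k : ℝ) * τ) (n := n) fun k _ =>
      (intervalIntegrable_const (c := τ⁻¹ • (z (k + 1) - z k))).congr_uIoo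
        (uIoo_of_le (hle k) ▸ (hcongr k).symm)
  rw [Finset.sum_congr rfl fun k _ => hint k, Finset.sum_range_sub, Nat.cast_zero,
    zero_mul] at hsum
  rw [stepPath, ← hsum, add_sub_cancel]

lemma satisfiesFlowRule_stepVelocity {W : Type*} [NormedAddCommGroup W] [InnerProductSpace ℝ W]
    {Ψ : W → ℝ} (hΨ : IsBoundedSublinear Ψ) {z : ℕ → W} (hτ : 0 < τ) {N : ℕ} {Λ : ℝ≥0}
    {w : ℝ → W →L[ℝ] ℝ} (hw : LipschitzOnWith Λ w (Icc 0 (N * τ)))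
    (hz : ∀ k < N, w ((k + 1) * τ) ∈ subdiff Ψ (z (k + 1) - z k)) :
    SatisfiesFlowRule Ψ w (N * τ) (Λ * τ) (stepVelocity τ z) := by
  rw [SatisfiesFlowRule]
  filter_upwards [ae_restrict_mem measurableSet_Ioo] with s hs
  obtain ⟨k, hk, hsk⟩ := exists_mem_Ico_of_mem_Ioo hτ hs
  refine ⟨w ((k + 1) * τ), ?_, ?_⟩
  · rw [stepVelocity_eq_of_mem_Ico hτ hsk]
    exact hΨ.mem_subdiff_smul (inv_nonneg.2 hτ.le) (hz k hk)
  have hnode : (k + 1) * τ ∈ Icc 0 (N * τ) :=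
    ⟨by positivity, by gcongr; exact_mod_cast hk⟩
  refine (hw.norm_sub_le hnode (Ioo_subset_Icc_self hs)).trans ?_
  rw [Real.norm_of_nonneg (sub_nonneg.2 hsk.2.le)]
  gcongr
  linarith [hsk.1]

end Interpolation

section Approximation

variable {W : Type*} [NormedAddCommGroup W] [InnerProductSpace ℝ W]
  {DE : W → W →L[ℝ] ℝ} {ℓ : ℝ → W →L[ℝ] ℝ} {L Q M : ℝ≥0} {T : ℝ} {z₀ : W}

lemma lipschitzOnWith_force (hℓ : LipschitzOnWith L ℓ (Icc 0 T))
    (hDE : LipschitzOnWith Q DE (Metric.closedBall z₀ (M * T))) {y : ℝ → W}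
    (hy : LipschitzOnWith M y (Icc 0 T)) (hy₀ : y 0 = z₀) :
    LipschitzOnWith (L + Q * M) (fun s => ℓ s - DE (y s)) (Icc 0 T) :=
  hℓ.sub (hDE.comp hy fun _ hs => mem_closedBall_of_lipschitzOnWith_Icc hy hy₀ hs)

/-- Implicit Euler: the increments solve `ℓ(t_{k+1}) - DE(z_{k+1}) ∈ ∂Ψ(z_{k+1} - z_k)`. -/
lemma IsUniformlyConvexEnergy.exists_approximation [CompleteSpace W] {E : W → ℝ}
    {D2E : W → W →L[ℝ] W →L[ℝ] ℝ} {κ : ℝ≥0} {Ψ : W → ℝ}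
    (hE : IsUniformlyConvexEnergy E DE D2E κ) (hΨ : IsBoundedSublinear Ψ) (hT : 0 < T)
    (hℓ : LipschitzOnWith L ℓ (Icc 0 T))
    (hDE : LipschitzOnWith Q DE (Metric.closedBall z₀ (↑(L / κ) * T)))
    (hz₀ : ∀ v, (ℓ 0 - DE z₀) v ≤ Ψ v) (n : ℕ) :
    ∃ y g, IsBoundedPrimitive T z₀ (L / κ) y g ∧
      SatisfiesFlowRule Ψ (fun s => ℓ s - DE (y s)) T (↑(L + Q * (L / κ)) * (T / (n + 1))) g := by
  set τ : ℝ := T / (n + 1)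
  have hτ : 0 < τ := by positivity
  have hTτ : (n + 1 : ℕ) * τ = T := by rw [Nat.cast_succ]; exact mul_div_cancel₀ T (by positivity)
  obtain ⟨z, rfl, hz⟩ := hE.exists_incremental_sequence hΨ (fun k => ℓ (k * τ)) z₀
  have hnode {k : ℕ} (hk : k ≤ n + 1) : k * τ ∈ Icc 0 T :=
    ⟨by positivity, by rw [← hTτ]; gcongr⟩
  have hincr : ∀ k < n + 1, ‖z (k + 1) - z k‖ ≤ ↑(L / κ) * τ := by
    intro k hk
    have hload := hℓ.norm_sub_le (hnode hk) (hnode hk.le)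
    rw [← sub_mul, Nat.cast_succ, add_sub_cancel_left, one_mul, Real.norm_of_nonneg hτ.le] at hload
    have hle := hE.mul_norm_increment_le (φ := fun k => ℓ (k * τ)) hΨ (by simpa using hz₀) hz k
    rw [NNReal.coe_div, div_mul_eq_mul_div, le_div_iff₀' (NNReal.coe_pos.2 hE.pos)]
    exact hle.trans (by exact_mod_cast hload)
  have hy := isBoundedPrimitive_stepPath hτ hincr
  have hflow : SatisfiesFlowRule Ψ (fun s => ℓ s - DE (stepPath τ z s)) ((n + 1 : ℕ) * τ)
      (↑(L + Q * (L / κ)) * τ) (stepVelocity τ z) := by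
    rw [← hTτ] at hℓ hDE
    refine satisfiesFlowRule_stepVelocity hΨ hτ (lipschitzOnWith_force hℓ hDE hy.lipschitzOnWith
      (hy.apply_zero (by positivity))) fun k _ => ?_
    have hval := stepPath_natCast_mul hτ z (k + 1)
    rw [Nat.cast_succ] at hval
    simpa only [hval, Nat.cast_succ] using hz k
  rw [hTτ] at hy hflow
  exact ⟨_, _, hy, hflow⟩

end Approximation

section PointwiseLimit

lemma lipschitzOnWith_of_tendsto {α β : Type*} [PseudoMetricSpace α] [PseudoMetricSpace β]
    {s : Set α} {M : ℝ≥0} {f : α → β} {fₙ : ℕ → α → β} (h : ∀ n, LipschitzOnWith M (fₙ n) s)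
    (hlim : ∀ x ∈ s, Tendsto (fun n => fₙ n x) atTop (𝓝 (f x))) : LipschitzOnWith M f s :=
  .of_dist_le_mul fun a ha b hb =>
    le_of_tendsto' ((hlim a ha).dist (hlim b hb)) fun n => (h n).dist_le_mul a ha b hb

lemma IsEnergeticPath.of_tendsto {W : Type*} [NormedAddCommGroup W] [InnerProductSpace ℝ W]
    {Ψ : W → ℝ} {w : ℝ → W →L[ℝ] ℝ} {wₙ : ℕ → ℝ → W →L[ℝ] ℝ} {T C : ℝ} {M : ℝ≥0} {eₙ : ℕ → ℝ}
    {y : ℝ → W} {yₙ : ℕ → ℝ → W} (hΨ : Continuous Ψ)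
    (h : ∀ n, IsEnergeticPath Ψ (wₙ n) T M C (eₙ n) (yₙ n)) (he : Tendsto eₙ atTop (𝓝 0))
    (hlim : ∀ s ∈ Icc 0 T, Tendsto (fun n => yₙ n s) atTop (𝓝 (y s)))
    (hw : ∀ s ∈ Icc 0 T, Tendsto (fun n => wₙ n s) atTop (𝓝 (w s))) :
    IsEnergeticPath Ψ w T M C 0 y := by
  have happly {a : ℝ} (ha : a ∈ Icc 0 T) {v : W} {u : ℕ → W} (hu : Tendsto u atTop (𝓝 v)) :
      Tendsto (fun n => wₙ n a (u n)) atTop (𝓝 (w a v)) :=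
    (isBoundedBilinearMap_apply.continuous.tendsto (w a, v)).comp ((hw a ha).prodMk_nhds hu)
  refine ⟨lipschitzOnWith_of_tendsto (fun n => (h n).lipschitzOnWith) hlim, ?_, ?_⟩
  · intro a ha v
    exact le_of_tendsto_of_tendsto' (happly ha tendsto_const_nhds)
      ((he.mul_const _).const_add _) fun n => (h n).stable a ha v
  · intro a ha b hb hab
    have hincr := (hlim b hb).sub (hlim a ha)
    exact le_of_tendsto_of_tendsto' ((hΨ.tendsto _).comp hincr)
      (((happly ha hincr).add_const _).add ((he.mul_const _).mul_const _))
      fun n => (h n).energy_le a ha b hb hab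

lemma exists_inner_eq_of_tendsto_of_norm_le {H : Type*} [NormedAddCommGroup H]
    [InnerProductSpace ℝ H] [CompleteSpace H] {d : ℕ → H} {B : ℝ} (hd : ∀ n, ‖d n‖ ≤ B) :
    ∃ g : H, ∀ (v : H) (l : ℝ), Tendsto (fun n => ⟪v, d n⟫) atTop (𝓝 l) → ⟪v, g⟫ = l := by
  set x : ℕ → WeakDual ℝ H := fun n =>
    StrongDual.toWeakDual (InnerProductSpace.toDual ℝ H (d n))
  obtain ⟨φ, -, hφ⟩ := (WeakDual.isCompact_closedBall (𝕜 := ℝ) (E := H) 0 B).exists_mapClusterPt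
    (f := atTop) (u := x) (tendsto_principal.2 (.of_forall fun n => by
      rw [mem_preimage, mem_closedBall_zero_iff]
      exact ((InnerProductSpace.toDual ℝ H).norm_map (d n)).trans_le (hd n)))
  refine ⟨(InnerProductSpace.toDual ℝ H).symm (WeakDual.toStrongDual φ), fun v l hl => ?_⟩
  have heval : (fun n => ⟪v, d n⟫) = (fun ψ : WeakDual ℝ H => ψ v) ∘ x :=
    funext fun n => real_inner_comm _ _
  rw [heval] at hl
  rw [real_inner_comm, InnerProductSpace.toDual_symm_apply]
  exact eq_of_nhds_neBot
    ((hφ.continuousAt_comp (WeakDual.eval_continuous v).continuousAt).clusterPt.mono hl)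

variable {W : Type*} [NormedAddCommGroup W] [InnerProductSpace ℝ W] [CompleteSpace W]
  {T : ℝ} {y₀ : W} {M : ℝ≥0} {y : ℝ → W}

lemma exists_primitive_of_tendsto {yₙ gₙ : ℕ → ℝ → W} (hT : 0 ≤ T)
    (h : ∀ n, IsBoundedPrimitive T y₀ M (yₙ n) (gₙ n))
    (hlim : ∀ s ∈ Icc 0 T, Tendsto (fun n => yₙ n s) atTop (𝓝 (y s))) :
    ∃ g, IntervalIntegrable g volume 0 T ∧
      ∀ s ∈ Icc 0 T, y s = y₀ + ∫ r in (0 : ℝ)..s, g r := by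
  set μ := volume.restrict (Ioc 0 T)
  have hbound (n : ℕ) : ∀ᵐ s ∂μ, ‖gₙ n s‖ ≤ M :=
    ae_Ioc_of_ae_restrict_Ioo (h n).norm_le le_rfl le_rfl
  have hmem (n : ℕ) : MemLp (gₙ n) 2 μ :=
    .of_bound (h n).intervalIntegrable.aestronglyMeasurable M (hbound n)
  obtain ⟨g, hg⟩ := exists_inner_eq_of_tendsto_of_norm_le fun n =>
    Lp.norm_le_of_ae_bound (f := (hmem n).toLp (gₙ n)) M.coe_nonneg <| by
      filter_upwards [(hmem n).coeFn_toLp, hbound n] with s hs hle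
      rwa [hs]
  have hint : Integrable g μ := (Lp.memLp g).integrable (by norm_num)
  refine ⟨g, (intervalIntegrable_iff_integrableOn_Ioc_of_le hT).2 hint, fun s hs => ?_⟩
  have hrestrict (f : ℝ → W) : ∫ r in Ioc 0 s, f r ∂μ = ∫ r in (0 : ℝ)..s, f r := by
    rw [Measure.restrict_restrict measurableSet_Ioc, inter_eq_left.2 (Ioc_subset_Ioc_right hs.2),
      intervalIntegral.integral_of_le hs.1]
  refine ext_inner_left ℝ fun v => ?_
  have hweak := hg (indicatorConstLp 2 (measurableSet_Ioc (a := 0) (b := s)) (measure_ne_top _ _) v)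
    ⟪v, y s - y₀⟫ <| by
      refine (tendsto_const_nhds.inner ((hlim s hs).sub_const y₀)).congr fun n => ?_
      rw [L2.inner_indicatorConstLp_eq_inner_setIntegral, (h n).eq_integral s hs,
        add_sub_cancel_left, ← hrestrict]
      exact congrArg _ (integral_congr_ae (ae_restrict_of_ae (hmem n).coeFn_toLp.symm))
  rw [L2.inner_indicatorConstLp_eq_inner_setIntegral, hrestrict] at hweak
  rw [inner_add_right, hweak, inner_sub_right, add_sub_cancel]

lemma IsBoundedPrimitive.exists_of_tendsto {yₙ gₙ : ℕ → ℝ → W} (hT : 0 ≤ T)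
    (h : ∀ n, IsBoundedPrimitive T y₀ M (yₙ n) (gₙ n))
    (hlim : ∀ s ∈ Icc 0 T, Tendsto (fun n => yₙ n s) atTop (𝓝 (y s))) :
    ∃ g, IsBoundedPrimitive T y₀ M y g := by
  obtain ⟨g, hint, heq⟩ := exists_primitive_of_tendsto hT h hlim
  have hlip := lipschitzOnWith_of_tendsto (fun n => (h n).lipschitzOnWith) hlim
  refine ⟨g, ?_, hint, heq⟩
  filter_upwards [ae_hasDerivAt_of_eq_integral hint heq, ae_restrict_mem measurableSet_Ioo]
    with s hs hsT
  refine hs.le_of_lip' M.coe_nonneg ?_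
  filter_upwards [Icc_mem_nhds hsT.1 hsT.2] with t ht
  exact hlip.norm_sub_le ht (Ioo_subset_Icc_self hsT)

end PointwiseLimit

section WellPosedness

lemma cauchySeq_of_norm_sub_sq_le {E : Type*} [SeminormedAddCommGroup E] {u : ℕ → E} {e : ℕ → ℝ}
    {K : ℝ≥0} (hanti : Antitone e) (hlim : Tendsto e atTop (𝓝 0))
    (hu : ∀ n m, ‖u n - u m‖ ^ 2 ≤ K * (e n + e m)) : CauchySeq u := by
  refine cauchySeq_of_le_tendsto_0 (fun N => √(K * (e N + e N))) (fun n m N hn hm => ?_) ?_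
  · rw [dist_eq_norm]
    refine Real.le_sqrt_of_sq_le ((hu n m).trans ?_)
    gcongr <;> exact hanti ‹_›
  · simpa only [add_zero, mul_zero, Real.sqrt_zero] using ((hlim.add hlim).const_mul (K : ℝ)).sqrt

namespace IsUniformlyConvexEnergy

variable {W : Type*} [NormedAddCommGroup W] [InnerProductSpace ℝ W] [CompleteSpace W]
  {E : W → ℝ} {DE : W → W →L[ℝ] ℝ} {D2E : W → W →L[ℝ] W →L[ℝ] ℝ} {κ L M M₁ M₂ : ℝ≥0} {Ψ : W → ℝ}
  {ℓ : ℝ → W →L[ℝ] ℝ} {T : ℝ} {z₀ : W} {y₁ y₂ g₁ g₂ : ℝ → W}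

lemma exists_isEnergeticPath (hE : IsUniformlyConvexEnergy E DE D2E κ)
    (hΨ : IsBoundedSublinear Ψ) (hT : 0 < T) (hℓ : LipschitzOnWith L ℓ (Icc 0 T)) (M : ℝ≥0)
    (z₀ : W) :
    ∃ C, ∀ {e : ℝ} {y g : ℝ → W}, IsBoundedPrimitive T z₀ M y g →
      SatisfiesFlowRule Ψ (fun s => ℓ s - DE (y s)) T e g →
      IsEnergeticPath Ψ (fun s => ℓ s - DE (y s)) T M C e y := by
  obtain ⟨Q, hQ⟩ := hE.exists_taylorBoundOn (convex_closedBall z₀ (M * T))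
    Metric.isBounded_closedBall
  exact ⟨_, fun hy hflow => hflow.isEnergeticPath hΨ hT hy
    (lipschitzOnWith_force hℓ hQ.lipschitzOn hy.lipschitzOnWith (hy.apply_zero hT.le))⟩

lemma exists_tendsto_isEnergeticPath (hE : IsUniformlyConvexEnergy E DE D2E κ)
    (hΨ : IsBoundedSublinear Ψ) {C : ℝ} {e : ℕ → ℝ} {y : ℕ → ℝ → W} (he : ∀ n, 0 ≤ e n)
    (hanti : Antitone e) (hlim : Tendsto e atTop (𝓝 0))
    (hy : ∀ n, IsEnergeticPath Ψ (fun s => ℓ s - DE (y n s)) T M C (e n) (y n))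
    (hy₀ : ∀ n, y n 0 = z₀) :
    ∃ x, (∀ s ∈ Icc 0 T, Tendsto (fun n => y n s) atTop (𝓝 (x s))) ∧
      IsEnergeticPath Ψ (fun s => ℓ s - DE (x s)) T M C 0 x := by
  obtain ⟨K, hK⟩ := hE.exists_norm_sub_sq_le Ψ ℓ T M C z₀
  have hconv : ∀ s ∈ Icc 0 T, ∃ x, Tendsto (fun n => y n s) atTop (𝓝 x) := fun s hs =>
    cauchySeq_tendsto_of_complete <| cauchySeq_of_norm_sub_sq_le hanti hlim fun n m =>
      hK (he n) (he m) (hy n) (hy m) (hy₀ n) (hy₀ m) s hs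
  choose! x hx using hconv
  exact ⟨x, hx, .of_tendsto hΨ.continuous hy hlim hx fun s hs =>
    ((hE.continuous_deriv.tendsto _).comp (hx s hs)).const_sub _⟩

theorem exists_solution (hE : IsUniformlyConvexEnergy E DE D2E κ) (hΨ : IsBoundedSublinear Ψ)
    (hT : 0 < T) (hℓ : LipschitzOnWith L ℓ (Icc 0 T)) (hz₀ : ℓ 0 - DE z₀ ∈ subdiff Ψ 0) :
    ∃ y g, IsBoundedPrimitive T z₀ (L / κ) y g ∧
      SatisfiesFlowRule Ψ (fun s => ℓ s - DE (y s)) T 0 g := by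
  obtain ⟨Q, hQ⟩ := hE.exists_taylorBoundOn (convex_closedBall z₀ (↑(L / κ) * T))
    Metric.isBounded_closedBall
  choose y g hy hflow using
    hE.exists_approximation hΨ hT hℓ hQ.lipschitzOn (hΨ.mem_subdiff_zero_iff.1 hz₀)
  obtain ⟨C, hC⟩ := hE.exists_isEnergeticPath hΨ hT hℓ (L / κ) z₀
  have herr : Tendsto (fun n : ℕ => ↑(L + Q * (L / κ)) * (T / (n + 1))) atTop (𝓝 0) := by
    simpa only [mul_zero, mul_one_div] using
      (tendsto_one_div_add_atTop_nhds_zero_nat (𝕜 := ℝ)).const_mul T |>.const_mul ↑(L + Q * (L / κ))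
  obtain ⟨x, hx, hpath⟩ := hE.exists_tendsto_isEnergeticPath hΨ (fun n => by positivity)
    (fun n m hnm => by gcongr) herr (fun n => hC (hy n) (hflow n))
    fun n => (hy n).apply_zero hT.le
  obtain ⟨v, hv⟩ := IsBoundedPrimitive.exists_of_tendsto hT.le hy hx
  exact ⟨x, v, hv, hpath.satisfiesFlowRule hΨ hv⟩

theorem eqOn_of_satisfiesFlowRule (hE : IsUniformlyConvexEnergy E DE D2E κ)
    (hΨ : IsBoundedSublinear Ψ) (hT : 0 < T) (hℓ : LipschitzOnWith L ℓ (Icc 0 T))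
    (hy₁ : IsBoundedPrimitive T z₀ M₁ y₁ g₁)
    (hflow₁ : SatisfiesFlowRule Ψ (fun s => ℓ s - DE (y₁ s)) T 0 g₁)
    (hy₂ : IsBoundedPrimitive T z₀ M₂ y₂ g₂)
    (hflow₂ : SatisfiesFlowRule Ψ (fun s => ℓ s - DE (y₂ s)) T 0 g₂) :
    EqOn y₁ y₂ (Icc 0 T) := by
  obtain ⟨C, hC⟩ := hE.exists_isEnergeticPath hΨ hT hℓ (max M₁ M₂) z₀
  obtain ⟨K, hK⟩ := hE.exists_norm_sub_sq_le Ψ ℓ T (max M₁ M₂) C z₀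
  have hle := hK le_rfl le_rfl (hC (hy₁.mono (le_max_left _ _)) hflow₁)
    (hC (hy₂.mono (le_max_right _ _)) hflow₂) (hy₁.apply_zero hT.le) (hy₂.apply_zero hT.le)
  intro s hs
  have hsq : ‖y₁ s - y₂ s‖ ^ 2 ≤ 0 := by simpa only [add_zero, mul_zero] using hle s hs
  exact sub_eq_zero.1 (norm_eq_zero.1 (pow_eq_zero_iff two_ne_zero |>.1
    (hsq.antisymm (sq_nonneg _))))

end IsUniformlyConvexEnergy

end WellPosedness

section RateIndependentSystem

lemma opNorm_le_of_forall_abs_apply_self_le {H : Type*} [NormedAddCommGroup H]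
    [InnerProductSpace ℝ H] [CompleteSpace H] {B : H →L[ℝ] H →L[ℝ] ℝ} {c : ℝ}
    (hc : 0 ≤ c) (hsymm : ∀ u v, B u v = B v u) (hB : ∀ v, |B v v| ≤ c * ‖v‖ ^ 2) : ‖B‖ ≤ c := by
  set S := InnerProductSpace.continuousLinearMapOfBilin (𝕜 := ℝ) B
  have hinner (u v : H) : ⟪S u, v⟫ = B u v :=
    InnerProductSpace.continuousLinearMapOfBilin_apply (𝕜 := ℝ) B u v
  have hsymmetric : S.IsSymmetric := fun u v => by
    rw [ContinuousLinearMap.coe_coe, hinner, real_inner_comm, hinner, hsymm]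
  have hS : ‖S‖ ≤ c := by
    rw [S.norm_eq_iSup_rayleighQuotient hsymmetric]
    refine ciSup_le fun v => ?_
    rw [ContinuousLinearMap.rayleighQuotient, ContinuousLinearMap.reApplyInnerSelf_apply, hinner,
      RCLike.re_to_real, abs_div, abs_sq]
    exact div_le_of_le_mul₀ (sq_nonneg _) hc (hB v)
  refine B.opNorm_le_bound₂ hc fun u v => ?_
  rw [← hinner]
  exact (norm_inner_le_norm _ _).trans (by gcongr; exact S.le_of_opNorm_le hS u)

variable {H U : Type*} [NormedAddCommGroup H] [InnerProductSpace ℝ H]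
  [NormedAddCommGroup U] [InnerProductSpace ℝ U]
  {ι : H →L[ℝ] U} {A : H →L[ℝ] H →L[ℝ] ℝ} {F : H → ℝ} {DF : H → U →L[ℝ] ℝ}
  {D2F : H → H →L[ℝ] U →L[ℝ] ℝ} {R : U → ℝ} {ℓ : ℝ → U →L[ℝ] ℝ} {T : ℝ} {z₀ : H} {y : ℝ → H}

/-- The Hessian `A + D²F(z)` of the energy as a bilinear form on the state space; the values of
`D²F(z)` are functionals on the larger space `U`, restricted along `ι`. -/
def energyHessian (ι : H →L[ℝ] U) (A : H →L[ℝ] H →L[ℝ] ℝ) (D2F : H → H →L[ℝ] U →L[ℝ] ℝ) (z : H) :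
    H →L[ℝ] H →L[ℝ] ℝ :=
  A + (ContinuousLinearMap.precomp ℝ ι).comp (D2F z)

lemma energyHessian_apply (z u v : H) : energyHessian ι A D2F z u v = A u v + D2F z u (ι v) :=
  rfl

lemma hasFDerivAt_semilinear_energy (hA : ∀ z w, A z w = A w z)
    (hF : ∀ w, HasFDerivAt F ((DF w).comp ι) w) (z : H) :
    HasFDerivAt (fun z => (1 / 2 : ℝ) * A z z + F z) (A z + (DF z).comp ι) z := by
  have hquad : HasFDerivAt (fun z => A z z) _ z := A.hasFDerivAt.clm_apply (hasFDerivAt_id z)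
  refine ((hquad.const_mul (1 / 2 : ℝ)).add (hF z)).congr_fderiv ?_
  ext v
  simp [hA v z]
  ring

lemma hasFDerivAt_energyHessian (hDF : ∀ w, HasFDerivAt DF (D2F w) w) (z : H) :
    HasFDerivAt (fun z => A z + (DF z).comp ι) (energyHessian ι A D2F z) z := by
  have hcomp := ((ContinuousLinearMap.precomp ℝ ι).hasFDerivAt (x := DF z)).comp z (hDF z)
  exact A.hasFDerivAt.add hcomp

lemma isUniformlyConvexEnergy [CompleteSpace H] {κ : ℝ≥0} (hA : ∀ z w, A z w = A w z)
    (hF : ∀ w, HasFDerivAt F ((DF w).comp ι) w) (hDF : ∀ w, HasFDerivAt DF (D2F w) w)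
    (hC21 : ∀ r : ℝ, 0 < r → ∃ Cr : ℝ, 0 ≤ Cr ∧ ∀ z₁ z₂ v : H, ‖z₁‖ ≤ r → ‖z₂‖ ≤ r →
      D2F z₁ v (ι v) - D2F z₂ v (ι v) ≤ Cr * ‖z₁ - z₂‖ * ‖v‖ ^ 2)
    (hconv : UniformlyConvex A D2F ι κ) :
    IsUniformlyConvexEnergy (fun z => (1 / 2 : ℝ) * A z z + F z) (fun z => A z + (DF z).comp ι)
      (energyHessian ι A D2F) κ where
  hasFDerivAt := hasFDerivAt_semilinear_energy hA hF
  hasFDerivAt_deriv := hasFDerivAt_energyHessian hDF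
  pos := NNReal.coe_pos.1 hconv.1
  le_hessian := hconv.2
  lipschitzOn_hessian s hs := by
    obtain ⟨r, hr, hsr⟩ := hs.subset_closedBall_lt 0 0
    obtain ⟨C, hC, hle⟩ := hC21 r hr
    have hnorm {z : H} (hz : z ∈ s) : ‖z‖ ≤ r := mem_closedBall_zero_iff.1 (hsr hz)
    have hsymm (z u v : H) : energyHessian ι A D2F z u v = energyHessian ι A D2F z v u :=
      second_derivative_symmetric (hasFDerivAt_semilinear_energy hA hF)
        (hasFDerivAt_energyHessian hDF z) u v
    refine ⟨C.toNNReal, LipschitzOnWith.of_dist_le_mul fun a ha b hb => ?_⟩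
    rw [Real.coe_toNNReal C hC, dist_eq_norm, dist_eq_norm]
    refine opNorm_le_of_forall_abs_apply_self_le (by positivity) (fun u v => ?_) fun v => ?_
    · simp only [sub_apply, hsymm a u v, hsymm b u v]
    · simp only [sub_apply, energyHessian_apply, add_sub_add_left_eq_sub]
      rw [abs_sub_le_iff]
      have hba := hle b a v (hnorm hb) (hnorm ha)
      rw [norm_sub_rev] at hba
      exact ⟨hle a b v (hnorm ha) (hnorm hb), hba⟩

lemma neg_DI_eq (t : ℝ) (z : H) :
    -DI A DF ℓ ι t z = (ℓ t).comp ι - (A z + (DF z).comp ι) :=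
  neg_sub _ _

lemma satisfiesFlowRule_iff_ae_exists_mem_subdiff (hR : IsBoundedSublinear R) {g : ℝ → H} :
    SatisfiesFlowRule (fun v => R (ι v))
        (fun s => (ℓ s).comp ι - (A (y s) + (DF (y s)).comp ι)) T 0 g ↔
      ∀ᵐ s ∂volume.restrict (Ioo 0 T),
        ∃ ξ ∈ subdiff R (ι (g s)), ξ.comp ι + DI A DF ℓ ι s (y s) = 0 := by
  simp only [SatisfiesFlowRule, norm_le_zero_iff, sub_eq_zero, exists_eq_right,
    hR.exists_mem_subdiff_comp_add_eq_zero_iff, neg_DI_eq]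

lemma isDiffSolW1inf_iff (hR : IsBoundedSublinear R) (hT : 0 ≤ T) :
    IsDiffSolW1inf A DF ℓ R ι T z₀ y ↔ ∃ M g, IsBoundedPrimitive T z₀ M y g ∧
      SatisfiesFlowRule (fun v => R (ι v))
        (fun s => (ℓ s).comp ι - (A (y s) + (DF (y s)).comp ι)) T 0 g := by
  constructor
  · rintro ⟨-, g, ⟨C, hC⟩, hint, heq, hflow⟩
    exact ⟨C.toNNReal, g, ⟨hC.mono fun s hs => hs.trans (Real.le_coe_toNNReal C), hint, heq⟩,
      (satisfiesFlowRule_iff_ae_exists_mem_subdiff hR).2 hflow⟩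
  · rintro ⟨M, g, hy, hflow⟩
    exact ⟨hy.apply_zero hT, g, ⟨M, hy.norm_le⟩, hy.intervalIntegrable, hy.eq_integral,
      (satisfiesFlowRule_iff_ae_exists_mem_subdiff hR).1 hflow⟩

end RateIndependentSystem

theorem statement15_general {Z V : Type*}
    [NormedAddCommGroup Z] [InnerProductSpace ℝ Z] [CompleteSpace Z]
    [NormedAddCommGroup V] [InnerProductSpace ℝ V]
    (ι : Z →L[ℝ] V) (A : Z →L[ℝ] Z →L[ℝ] ℝ) (F : Z → ℝ) (DF : Z → V →L[ℝ] ℝ)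
    (D2F : Z → Z →L[ℝ] V →L[ℝ] ℝ) (R : V → ℝ) (ℓ : ℝ → V →L[ℝ] ℝ) (L : ℝ≥0) (T κ : ℝ)
    (hA : ∀ z w, A z w = A w z) (hF : ∀ w, HasFDerivAt F ((DF w).comp ι) w)
    (hDF : ∀ w, HasFDerivAt DF (D2F w) w)
    (hC21 : ∀ r : ℝ, 0 < r → ∃ Cr : ℝ, 0 ≤ Cr ∧ ∀ z₁ z₂ v : Z, ‖z₁‖ ≤ r → ‖z₂‖ ≤ r →
      D2F z₁ v (ι v) - D2F z₂ v (ι v) ≤ Cr * ‖z₁ - z₂‖ * ‖v‖ ^ 2)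
    (hconv : UniformlyConvex A D2F ι κ) (hR : IsBoundedSublinear R)
    (hℓ : LipschitzOnWith L ℓ (Icc 0 T)) (hT : 0 < T)
    (z₀ : Z) (hz₀ : LocStable R A DF ℓ ι 0 z₀) :
    ∃ y : ℝ → Z, IsDiffSolW1inf A DF ℓ R ι T z₀ y ∧
      ∀ y₂ : ℝ → Z, IsDiffSolW1inf A DF ℓ R ι T z₀ y₂ → ∀ s ∈ Icc (0 : ℝ) T, y₂ s = y s := by
  lift κ to ℝ≥0 using hconv.1.le
  have hE := isUniformlyConvexEnergy hA hF hDF hC21 hconv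
  have hload : LipschitzOnWith _ (fun t => (ℓ t).comp ι) (Icc 0 T) :=
    (ContinuousLinearMap.precomp ℝ ι).lipschitz.comp_lipschitzOnWith hℓ
  have hstable : (ℓ 0).comp ι - (A z₀ + (DF z₀).comp ι) ∈ subdiff (fun v => R (ι v)) 0 := by
    rw [← neg_DI_eq, ← hR.exists_mem_subdiff_comp_add_eq_zero_iff, map_zero]
    exact hz₀
  obtain ⟨y, g, hy, hflow⟩ := hE.exists_solution (hR.comp ι) hT hload hstable
  refine ⟨y, (isDiffSolW1inf_iff hR hT.le).2 ⟨_, g, hy, hflow⟩, fun y₂ hsol₂ => ?_⟩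
  obtain ⟨_, _, hy₂, hflow₂⟩ := (isDiffSolW1inf_iff hR hT.le).1 hsol₂
  exact hE.eqOn_of_satisfiesFlowRule (hR.comp ι) hT hload hy₂ hflow₂ hy hflow

/-- Theorem B.1: if the energy `I` is `κ`-uniformly convex, then
the rate-independent system possesses a unique differential solution
`y ∈ W^{1,∞}(0,T;Z)` with `y(0) = z₀` and `0 ∈ ∂R(y′(t)) + D_zI(t,y(t))` a.e. -/
theorem statement15
    (ι : Z →L[ℝ] V) (ιX : V →L[ℝ] X)
    (A : Z →L[ℝ] Z →L[ℝ] ℝ) (α : ℝ) (F : Z → ℝ) (DF : Z → V →L[ℝ] ℝ)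
    (D2F : Z → Z →L[ℝ] V →L[ℝ] ℝ) (R : V → ℝ) (ℓ : ℝ → V →L[ℝ] ℝ) (L T : ℝ)
    (hstand : StandingAssumptions ι ιX A α F DF D2F R ℓ L T)
    (hC21 : ∀ r : ℝ, 0 < r → ∃ Cr : ℝ, 0 ≤ Cr ∧ ∀ z₁ z₂ v : Z,
      ‖z₁‖ ≤ r → ‖z₂‖ ≤ r →
      D2F z₁ v (ι v) - D2F z₂ v (ι v) ≤ Cr * ‖z₁ - z₂‖ * ‖v‖ ^ 2)
    (κ : ℝ) (hconv : UniformlyConvex A D2F ι κ)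
    (z₀ : Z) (hz₀ : LocStable R A DF ℓ ι 0 z₀) :
    ∃ y : ℝ → Z, IsDiffSolW1inf A DF ℓ R ι T z₀ y ∧
      ∀ y₂ : ℝ → Z, IsDiffSolW1inf A DF ℓ R ι T z₀ y₂ →
        ∀ s ∈ Set.Icc (0 : ℝ) T, y₂ s = y s := by
  obtain ⟨-, -, -, -, hA, -, -, -, hF, hDF, -, -, hℓ, hT, hconvR, -, -, hsmul,
    ρ₁, ρ₂, -, hρ₂, hbound⟩ := hstand
  exact statement15_general ι A F DF D2F R ℓ _ T κ hA hF hDF hC21 hconv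
    (.of_convexOn hconvR hsmul ⟨⟨ρ₂, hρ₂.le⟩, fun v => (hbound v).2⟩) hℓ hT z₀ hz₀

end RIS
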